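/- arXiv:2411.03516 — 2 statements merged into one kernel-verified Lean document; each statement's English description precedes it below -/
import Mathlib

section
/- Let s ∈ L_e. Then: (i) for any r ∈ L, the word s•r belongs to L_e and L(s•r) = s•L(r); and (ii) for any r, t ∈ L, the substitution operation is associative: (s•r)•t = s•(r•t). -/
open Set Filter MeasureTheory Topology

noncomputable section

/-- The β-transformation `x ↦ βx - ⌊βx⌋`. -/
def Tbeta (β x : ℝ) : ℝ := Int.fract (β * x)

/-- The survivor set `K_β(t)`: points of `[0,1)` whose orbit never enters `[0,t)`. -/
def survivor (β t : ℝ) : Set ℝ :=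
  {x | x ∈ Set.Ico (0 : ℝ) 1 ∧ ∀ n : ℕ, t ≤ (Tbeta β)^[n] x}

/-- The set-valued bifurcation set `E_β`. -/
def Ebif (β : ℝ) : Set ℝ :=
  {t | t ∈ Set.Ico (0 : ℝ) 1 ∧ ∀ t' : ℝ, t < t' → survivor β t' ≠ survivor β t}

/-- `(c)_β = Σ_{i≥1} c_i β^{-i}` for an infinite digit sequence (indexed from `0`). -/
def valSeq (β : ℝ) (c : ℕ → ℕ) : ℝ := ∑' i : ℕ, (c i : ℝ) / β ^ (i + 1)

/-- `(w 0^∞)_β` for a finite word `w`. -/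
def valWord (β : ℝ) (w : List ℕ) : ℝ :=
  ∑ i ∈ Finset.range w.length, (w.getD i 0 : ℝ) / β ^ (i + 1)

/-- `w⁺`: increment the last letter of `w`. -/
def wplus (w : List ℕ) : List ℕ := w.dropLast ++ [w.getLast! + 1]

/-- `w⁻`: decrement the last letter of `w`. -/
def wminus (w : List ℕ) : List ℕ := w.dropLast ++ [w.getLast! - 1]

/-- `θ`: increment every digit of `w` by one. -/
def theta (w : List ℕ) : List ℕ := w.map (· + 1)

/-- `L(w)`: the lexicographically largest cyclic permutation of `w`. -/
def maxCyc (w : List ℕ) : List ℕ := ((List.range w.length).map w.rotate).foldl max []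

/-- `w^∞`: the periodic sequence with period block `w`. -/
def perSeq (w : List ℕ) : ℕ → ℕ := fun i => w.getD (i % w.length) 0

/-- The sequence given by the word `w` followed by the sequence `c`. -/
def wordSeq (w : List ℕ) (c : ℕ → ℕ) : ℕ → ℕ :=
  fun i => if i < w.length then w.getD i 0 else c (i - w.length)

/-- Strict lexicographic order `≺` on sequences. -/
def seqLt (x y : ℕ → ℕ) : Prop := ∃ n, (∀ i < n, x i = y i) ∧ x n < y n

/-- Lexicographic order `≼` on sequences. -/
def seqLe (x y : ℕ → ℕ) : Prop := x = y ∨ seqLt x y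

/-- The `n`-fold left shift `σⁿ` on sequences. -/
def shiftn (n : ℕ) (x : ℕ → ℕ) : ℕ → ℕ := fun i => x (i + n)

/-- One step of the Farey recursion: insert the concatenation `w_i w_{i+1}`
between consecutive entries. -/
def fareyInsert : List (List ℕ) → List (List ℕ)
  | [] => []
  | [w] => [w]
  | w :: v :: rest => w :: (w ++ v) :: fareyInsert (v :: rest)

/-- The ordered set `F_n` of Farey words of level `n`. -/
def fareyLevel : ℕ → List (List ℕ)
  | 0 => [[0], [1]]
  | n + 1 => fareyInsert (fareyLevel n)

/-- `F`: all Farey words of length at least two. -/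
def FareySet : Set (List ℕ) := {w | (∃ n, w ∈ fareyLevel n) ∧ w ≠ [0] ∧ w ≠ [1]}

/-- `F̂ = F ∪ {1}`. -/
def FareyHat : Set (List ℕ) := FareySet ∪ {[1]}

/-- The extended Farey set `F_e = {θ^k(w) : w ∈ F̂, k ≥ 0}`. -/
def FareyExt : Set (List ℕ) := {w | ∃ v ∈ FareyHat, ∃ k : ℕ, w = theta^[k] v}

/-- A nonempty word is Lyndon iff it is strictly smaller than each of its nontrivial
cyclic rotations (equivalently: aperiodic and lexicographically smallest among its
cyclic permutations). -/
def IsLyndon (w : List ℕ) : Prop := w ≠ [] ∧ ∀ i, 0 < i → i < w.length → w < w.rotate i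

/-- `L_e`: all Lyndon words over `ℕ ∪ {0}` except the single-letter word `0`. -/
def LyndonExt : Set (List ℕ) := {w | IsLyndon w ∧ w ≠ [0]}

/-- `L`: Lyndon words over `{0,1}` of length at least `2`. -/
def LyndonBin : Set (List ℕ) := {w | IsLyndon w ∧ 2 ≤ w.length ∧ ∀ d ∈ w, d ≤ 1}

/-- The block of `Φ_s` emitted for current digit `d` after previous digit `p`:
`L(s)` for `00`, `s⁻` for `10`, `L(s)⁺` for `01`, `s` for `11`. -/
def phiBlock (s : List ℕ) (p d : ℕ) : List ℕ :=
  if d = 0 then (if p = 0 then maxCyc s else wminus s)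
  else (if p = 0 then wplus (maxCyc s) else s)

def phiAux (s : List ℕ) : ℕ → List ℕ → List ℕ
  | _, [] => []
  | p, d :: rest => phiBlock s p d ++ phiAux s d rest

/-- The substitution `Φ_s` on finite words; `s • r = subst s r`.  An initial digit `0`
produces `s⁻`, an initial digit `1` produces `L(s)⁺`, and thereafter runs
`0^k` resp. `1^l` produce `L(s)^{k-1}` resp. `s^{l-1}`, in accordance with
`Φ_s(0^{k₁}1^{l₁}…) = s⁻ L(s)^{k₁-1} L(s)⁺ s^{l₁-1} …` and
`Φ_s(1^{k₁}0^{l₁}…) = L(s)⁺ s^{k₁-1} s⁻ L(s)^{l₁-1} …`. -/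
def subst (s r : List ℕ) : List ℕ :=
  match r with
  | [] => []
  | d :: rest => phiBlock s (1 - d) d ++ phiAux s d rest

/-- The substitution `Φ_s` on infinite sequences, as the limit of its values
on initial segments (each digit contributes a nonempty block, so the `i`-th letter
is determined by the first `i+1` digits). -/
def phiSeq (s : List ℕ) (c : ℕ → ℕ) : ℕ → ℕ :=
  fun i => (subst s (List.ofFn fun j : Fin (i + 1) => c j)).getD i 0

/-- `Λ_e(m) = {s₁ • s₂ • … • s_m : s₁ ∈ F_e, s₂,…,s_m ∈ F}`. -/
def LambdaE (m : ℕ) : Set (List ℕ) :=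
  {w | ∃ s₁ ∈ FareyExt, ∃ rs : List (List ℕ),
    rs.length = m - 1 ∧ (∀ r ∈ rs, r ∈ FareySet) ∧ w = rs.foldl subst s₁}

/-- `Λ_e = ∪_{m≥1} Λ_e(m)`. -/
def LambdaExt : Set (List ℕ) := ⋃ m ∈ Set.Ici 1, LambdaE m

/-- `β_ℓ^S`: the base `β > 1` with `(L(S)^∞)_β = 1` (it is unique since
`β ↦ (c)_β` is strictly decreasing). -/
def betaL (S : List ℕ) : ℝ :=
  Classical.epsilon fun β : ℝ => 1 < β ∧ valSeq β (perSeq (maxCyc S)) = 1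

/-- `β_*^S`: the base `β > 1` with `(L(S)⁺ S⁻ L(S)^∞)_β = 1`. -/
def betaStar (S : List ℕ) : ℝ :=
  Classical.epsilon fun β : ℝ =>
    1 < β ∧ valSeq β (wordSeq (wplus (maxCyc S) ++ wminus S) (perSeq (maxCyc S))) = 1

/-- `β_r^S`: the base `β > 1` with `(L(S)⁺ S^∞)_β = 1`. -/
def betaR (S : List ℕ) : ℝ :=
  Classical.epsilon fun β : ℝ => 1 < β ∧ valSeq β (wordSeq (wplus (maxCyc S)) (perSeq S)) = 1

/-- The Lyndon/Farey interval `J^S = [β_ℓ^S, β_r^S]`. -/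
def Jint (S : List ℕ) : Set ℝ := Set.Icc (betaL S) (betaR S)

/-- The basic interval `I^S = [β_ℓ^S, β_*^S]`. -/
def Iint (S : List ℕ) : Set ℝ := Set.Icc (betaL S) (betaStar S)

/-- The exceptional set `E = (1,∞) ∖ ∪_{s ∈ F_e} J^s`. -/
def Eexc : Set ℝ := Set.Ioi 1 \ ⋃ s ∈ FareyExt, Jint s

/-- The relative exceptional set `E^S = (J^S ∖ I^S) ∖ ∪_{r ∈ F} J^{S•r}`. -/
def EexcRel (S : List ℕ) : Set ℝ :=
  (Jint S \ Iint S) \ ⋃ r ∈ FareySet, Jint (subst S r)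

/-- The infinitely renormalizable set `E_∞ = ∩_{m≥1} ∪_{S ∈ Λ_e(m)} J^S`. -/
def Einf : Set ℝ := ⋂ m ∈ Set.Ici 1, ⋃ S ∈ LambdaE m, Jint S

/-- `E_L = E ∪ {β_ℓ^s : s ∈ F_e}`. -/
def EL : Set ℝ := Eexc ∪ {x | ∃ s ∈ FareyExt, x = betaL s}

/-- The critical value `τ(β) = min{t > 0 : dim_H K_β(t) = 0}`. -/
def tau (β : ℝ) : ℝ := sInf {t : ℝ | 0 < t ∧ dimH (survivor β t) = 0}

end

/-- `u` and `v` first differ at a position lying in both words, where the letters are related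
by `R`. -/
def LexDiff (R : ℕ → ℕ → Prop) : List ℕ → List ℕ → Prop
  | a :: u, b :: v => R a b ∨ (a = b ∧ LexDiff R u v)
  | _, _ => False

/-- The Lyndon property with respect to an arbitrary order `R` of the alphabet. -/
def LyndonFor (R : ℕ → ℕ → Prop) (w : List ℕ) : Prop :=
  ∀ u v, w = u ++ v → u ≠ [] → v ≠ [] → LexDiff R w (v ++ u)

/-- `v` is obtained from `u` by replacing the last letter with its `R`-successor. -/
def LastCovBy (R : ℕ → ℕ → Prop) (u v : List ℕ) : Prop :=
  ∃ w x y, u = w ++ [x] ∧ v = w ++ [y] ∧ R x y ∧ ∀ z, ¬(R x z ∧ R z y)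

section LexDiff

variable {R : ℕ → ℕ → Prop}

theorem LexDiff.swap : ∀ {u v : List ℕ}, LexDiff R u v → LexDiff (Function.swap R) v u
  | [], _, h => by simp [LexDiff] at h
  | _ :: _, [], h => by simp [LexDiff] at h
  | _ :: _, _ :: _, h => h.imp id fun h => ⟨h.1.symm, h.2.swap⟩

theorem LexDiff.append : ∀ {u v : List ℕ} (x y : List ℕ), LexDiff R u v →
    LexDiff R (u ++ x) (v ++ y)
  | [], _, _, _, h => by simp [LexDiff] at h
  | _ :: _, [], _, _, h => by simp [LexDiff] at h
  | _ :: _, _ :: _, x, y, h => h.imp id fun h => ⟨h.1, h.2.append x y⟩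

theorem LexDiff.append_left {u v : List ℕ} (h : LexDiff R u v) :
    ∀ w : List ℕ, LexDiff R (w ++ u) (w ++ v)
  | [] => h
  | _ :: w => Or.inr ⟨rfl, h.append_left w⟩

theorem LexDiff.of_append : ∀ {u v x y : List ℕ}, u.length = v.length →
    LexDiff R (u ++ x) (v ++ y) → LexDiff R u v ∨ (u = v ∧ LexDiff R x y)
  | [], [], _, _, _, h => Or.inr ⟨rfl, h⟩
  | [], _ :: _, _, _, hl, _ => by simp at hl
  | _ :: _, [], _, _, hl, _ => by simp at hl
  | _ :: _, _ :: _, _, _, hl, h => by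
    rcases h with h | ⟨rfl, h⟩
    · exact Or.inl (Or.inl h)
    · rcases LexDiff.of_append (by simpa using hl) h with h' | ⟨rfl, h'⟩
      · exact Or.inl (Or.inr ⟨rfl, h'⟩)
      · exact Or.inr ⟨rfl, h'⟩

theorem LastCovBy.swap {u v : List ℕ} (h : LastCovBy R u v) :
    LastCovBy (Function.swap R) v u := by
  obtain ⟨w, x, y, rfl, rfl, h, hc⟩ := h
  exact ⟨w, y, x, rfl, rfl, h, fun z hz => hc z hz.symm⟩

theorem LastCovBy.length_eq {u v : List ℕ} (h : LastCovBy R u v) : u.length = v.length := by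
  obtain ⟨w, x, y, rfl, rfl, -⟩ := h
  simp

theorem LastCovBy.lexDiff {u v : List ℕ} (h : LastCovBy R u v) : LexDiff R u v := by
  obtain ⟨w, x, y, rfl, rfl, h, -⟩ := h
  exact LexDiff.append_left (u := [x]) (v := [y]) (Or.inl h) w

theorem LastCovBy.of_append_left {x y v : List ℕ} (h : LastCovBy R (x ++ y) v) (hy : y ≠ []) :
    ∃ y', v = x ++ y' ∧ LastCovBy R y y' := by
  obtain ⟨w, a, b, h, rfl, hab⟩ := h
  obtain ⟨y, c, rfl⟩ := List.eq_nil_or_concat' y |>.resolve_left hy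
  rw [← List.append_assoc] at h
  obtain ⟨rfl, h⟩ := List.append_inj' h rfl
  obtain rfl : c = a := by simpa using h
  exact ⟨y ++ [b], by simp, y, c, b, rfl, rfl, hab⟩

theorem LastCovBy.of_append_right {x y v : List ℕ} (h : LastCovBy R v (x ++ y)) (hy : y ≠ []) :
    ∃ y', v = x ++ y' ∧ LastCovBy R y' y := by
  obtain ⟨y', h, h'⟩ := h.swap.of_append_left hy
  exact ⟨y', h, h'.swap⟩

variable [IsStrictTotalOrder ℕ R]

theorem LexDiff.irrefl : ∀ u : List ℕ, ¬ LexDiff R u u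
  | [], h => h
  | a :: u, h => by
    rcases h with h | ⟨-, h⟩
    · exact irrefl_of R a h
    · exact LexDiff.irrefl u h

theorem LexDiff.trans : ∀ {u v w : List ℕ}, LexDiff R u v → LexDiff R v w → LexDiff R u w
  | [], _, _, h, _ => by simp [LexDiff] at h
  | _ :: _, [], _, h, _ => by simp [LexDiff] at h
  | _ :: _, _ :: _, [], _, h => by simp [LexDiff] at h
  | _ :: _, _ :: _, _ :: _, h, h' => by
    rcases h with h | ⟨rfl, h⟩ <;> rcases h' with h' | ⟨rfl, h'⟩
    · exact Or.inl (trans_of R h h')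
    · exact Or.inl h
    · exact Or.inl h'
    · exact Or.inr ⟨rfl, h.trans h'⟩

theorem LastCovBy.eq_or_lexDiff {u v w : List ℕ} (h : LastCovBy R v w) (hl : u.length = w.length)
    (huw : LexDiff R u w) : u = v ∨ LexDiff R u v := by
  obtain ⟨t, x, y, rfl, rfl, hxy, hc⟩ := h
  obtain ⟨u, z, rfl⟩ := List.eq_nil_or_concat' u |>.resolve_left (by rintro rfl; simp at hl)
  rcases LexDiff.of_append (by simpa using hl) huw with h | ⟨rfl, h⟩
  · exact Or.inr (h.append _ _)
  · have hz : R z y := by simpa [LexDiff] using h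
    rcases trichotomous_of R z x with h | rfl | h
    · exact Or.inr (LexDiff.append_left (u := [z]) (v := [x]) (Or.inl h) u)
    · exact Or.inl rfl
    · exact absurd ⟨h, hz⟩ (hc z)

/-- A Lyndon word is unbordered: its proper prefixes are smaller than its suffixes. -/
theorem LyndonFor.prefix_lexDiff_suffix {w u v u' v' : List ℕ} (hw : LyndonFor R w)
    (h : w = u ++ v) (h' : w = v' ++ u') (hl : v'.length = v.length) (hu : u ≠ [])
    (hv : v ≠ []) : LexDiff R v' v := by
  have h1 := hw u v h hu hv
  rw [h'] at h1
  rcases h1.of_append hl with h3 | ⟨rfl, h3⟩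
  · exact h3
  · exfalso
    have hlen : u.length = u'.length := by
      have := congrArg List.length (h.symm.trans h')
      simp at this
      omega
    have h2 := hw v' u' h' hv (by rintro rfl; exact hu (List.length_eq_zero_iff.1 hlen))
    rw [h] at h2
    rcases h2.of_append hlen with h4 | ⟨-, h4⟩
    · exact LexDiff.irrefl _ (h3.trans h4)
    · exact LexDiff.irrefl _ h4

end LexDiff

theorem List.IsRotated.exists_append {u v : List ℕ} (h : u ~r v) :
    ∃ x y, u = x ++ y ∧ v = y ++ x := by
  obtain ⟨n, hn, rfl⟩ := List.isRotated_iff_mod.1 h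
  exact ⟨u.take n, u.drop n, by simp, List.rotate_eq_drop_append_take hn⟩

theorem LyndonFor.eq_or_lexDiff_of_isRotated {R : ℕ → ℕ → Prop} {w v : List ℕ}
    (hw : LyndonFor R w) (h : w ~r v) : w = v ∨ LexDiff R w v := by
  obtain ⟨x, y, rfl, rfl⟩ := h.exists_append
  by_cases hx : x = []
  · simp [hx]
  by_cases hy : y = []
  · simp [hy]
  exact Or.inr (hw x y rfl hx hy)

/-- The prefixes of the smallest conjugate are minimal among all factors starting
at a given place. -/
theorem LyndonFor.prefix_le_of_isRotated {R : ℕ → ℕ → Prop} {w v x y x' y' : List ℕ}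
    (hw : LyndonFor R w) (h : w ~r v) (hwx : w = x ++ y) (hv : v = y' ++ x')
    (hl : x.length = x'.length) : x = x' ∨ LexDiff R x x' := by
  have h1 := hw.eq_or_lexDiff_of_isRotated (h.trans (hv ▸ List.isRotated_append))
  rw [hwx] at h1
  rcases h1 with h1 | h1
  · exact Or.inl (List.append_inj h1 hl).1
  · exact (h1.of_append hl).symm.imp And.left id

theorem lexDiff_lt_iff : ∀ {u v : List ℕ}, u.length = v.length →
    (LexDiff (· < ·) u v ↔ u < v)
  | [], [], _ => by simp [LexDiff]
  | [], _ :: _, h => by simp at h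
  | _ :: _, [], h => by simp at h
  | a :: u, b :: v, h => by
    rw [List.cons_lt_cons_iff, ← lexDiff_lt_iff (by simpa using h)]
    rfl

theorem isLyndon_iff {w : List ℕ} : IsLyndon w ↔ w ≠ [] ∧ LyndonFor (· < ·) w := by
  refine and_congr_right fun hw => ⟨?_, ?_⟩
  · rintro h u v rfl hu hv
    have := h u.length (List.length_pos_iff.2 hu)
      (by simpa using List.length_pos_iff.2 hv)
    rw [List.rotate_append_length_eq] at this
    exact (lexDiff_lt_iff (by simp [add_comm])).2 this
  · intro h i hi hiw
    have := h (w.take i) (w.drop i) (by simp) (by simp [hw]; omega) (by simpa using hiw)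
    rw [← List.rotate_eq_drop_append_take hiw.le] at this
    exact (lexDiff_lt_iff (by simp)).1 this

theorem foldl_max_mem_and_le (l : List (List ℕ)) (a : List ℕ) :
    l.foldl max a ∈ a :: l ∧ ∀ b ∈ a :: l, b ≤ l.foldl max a := by
  induction l generalizing a with
  | nil => simp
  | cons c l ih =>
    obtain ⟨h1, h2⟩ := ih (max a c)
    simp only [List.mem_cons, List.foldl_cons, forall_eq_or_imp] at h1 h2 ⊢
    refine ⟨?_, (le_max_left a c).trans h2.1, (le_max_right a c).trans h2.1, h2.2⟩
    rcases h1 with h1 | h1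
    · rcases max_choice a c with h | h
      · exact Or.inl (h1.trans h)
      · exact Or.inr (Or.inl (h1.trans h))
    · exact Or.inr (Or.inr h1)

theorem isRotated_maxCyc_and_le {w : List ℕ} (hw : w ≠ []) :
    w ~r maxCyc w ∧ ∀ v, w ~r v → v ≤ maxCyc w := by
  obtain ⟨h1, h2⟩ := foldl_max_mem_and_le ((List.range w.length).map w.rotate) []
  change maxCyc w ∈ _ at h1
  change ∀ b ∈ _, b ≤ maxCyc w at h2
  have hle : ∀ v, w ~r v → v ≤ maxCyc w := by
    rintro v ⟨n, rfl⟩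
    rw [← List.rotate_mod]
    exact h2 _ (List.mem_cons_of_mem _ (List.mem_map_of_mem
      (List.mem_range.2 (Nat.mod_lt _ (List.length_pos_iff.2 hw)))))
  refine ⟨?_, hle⟩
  rcases List.mem_cons.1 h1 with h1 | h1
  · have := hle w (List.IsRotated.refl w)
    rw [h1] at this
    obtain ⟨a, w, rfl⟩ := List.exists_cons_of_ne_nil hw
    exact absurd this (not_le.2 (List.nil_lt_cons a w))
  · obtain ⟨n, -, h⟩ := List.mem_map.1 h1
    exact ⟨n, h⟩

theorem LyndonFor.maxCyc {w : List ℕ} (hw : w ≠ []) (h : LyndonFor (· < ·) w) :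
    LyndonFor (Function.swap (· < ·)) (maxCyc w) := by
  intro u v huv hu hv
  obtain ⟨hrot, hmax⟩ := isRotated_maxCyc_and_le hw
  have hlen : (v ++ u).length = (_root_.maxCyc w).length := by simp [huv, add_comm]
  refine LexDiff.swap ((lexDiff_lt_iff hlen).2 (lt_of_le_of_ne
    (hmax _ (hrot.trans (huv ▸ List.isRotated_append))) fun heq => ?_))
  obtain ⟨n, hn⟩ := hrot
  have hfix : w.rotate u.length = w := by
    apply List.rotate_injective n
    simp only [List.rotate_rotate]
    rw [add_comm, ← List.rotate_rotate, hn]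
    conv_lhs => rw [huv, List.rotate_append_length_eq, heq]
  have hlw : w.length = u.length + v.length := by
    rw [← List.length_rotate w n, hn, huv, List.length_append]
  have := (isLyndon_iff.2 ⟨hw, h⟩).2 u.length (List.length_pos_iff.2 hu)
    (by have := List.length_pos_iff.2 hv; omega)
  rw [hfix] at this
  exact lt_irrefl _ this

theorem maxCyc_eq_of_isRotated {w m : List ℕ} (hw : w ≠ []) (h : w ~r m)
    (hm : LyndonFor (Function.swap (· < ·)) m) : maxCyc w = m := by
  obtain ⟨hrot, hmax⟩ := isRotated_maxCyc_and_le hw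
  have hr := h.symm.trans hrot
  rcases hm.eq_or_lexDiff_of_isRotated hr with h1 | h1
  · exact h1.symm
  · exact absurd ((lexDiff_lt_iff hr.perm.length_eq.symm).1 h1.swap) (not_lt.2 (hmax m h))

/-- The order-theoretic properties of the blocks of `Φ_s`, stated so that exchanging the letters
`l` and `h` and reversing `R` preserves them. -/
structure IsBlockSystem (R : ℕ → ℕ → Prop) (B : ℕ → ℕ → List ℕ) (l h : ℕ) : Prop where
  rel : R l h
  lyndon_high : LyndonFor R (B h h)
  lyndon_low : LyndonFor (Function.swap R) (B l l)
  isRotated : B h h ~r B l l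
  cov_high : LastCovBy R (B h l) (B h h)
  cov_low : LastCovBy R (B l l) (B l h)

namespace IsBlockSystem

variable {R : ℕ → ℕ → Prop} {B : ℕ → ℕ → List ℕ} {l h : ℕ}

theorem swap (hB : IsBlockSystem R B l h) : IsBlockSystem (Function.swap R) B h l :=
  ⟨hB.rel, hB.lyndon_low, hB.lyndon_high, hB.isRotated.symm, hB.cov_low.swap, hB.cov_high.swap⟩

theorem length_eq (hB : IsBlockSystem R B l h) {p d : ℕ} (hp : p = l ∨ p = h)
    (hd : d = l ∨ d = h) : (B p d).length = (B h l).length := by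
  have h1 := hB.isRotated.perm.length_eq
  have h2 := hB.cov_high.length_eq
  have h3 := hB.cov_low.length_eq
  rcases hp with rfl | rfl <;> rcases hd with rfl | rfl <;> omega

variable [IsStrictTotalOrder ℕ R]

theorem lexDiff_low (hB : IsBlockSystem R B l h) : LexDiff R (B h l) (B l l) := by
  rcases hB.lyndon_high.eq_or_lexDiff_of_isRotated hB.isRotated with h1 | h1
  · exact h1 ▸ hB.cov_high.lexDiff
  · exact hB.cov_high.lexDiff.trans h1

/-- The word read across the boundary of two consecutive blocks exceeds the smallest block. -/
theorem lexDiff_straddle (hB : IsBlockSystem R B l h) {p d e : ℕ} (hp : p = l ∨ p = h)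
    (hd : d = l ∨ d = h) (he : e = l ∨ e = h) {X Y X' Y' : List ℕ} (hXY : B p d = X ++ Y)
    (hXY' : B d e = X' ++ Y') (hl : X.length = X'.length) (hX : X ≠ []) (hY : Y ≠ []) :
    LexDiff R (B h l) (Y ++ X') := by
  have hlen := hB.length_eq hp hd
  have hlen' := hB.length_eq hd he
  have hhh := hB.length_eq (.inr rfl) (.inr rfl)
  have hll := hB.length_eq (.inl rfl) (.inl rfl)
  have hXpos := List.length_pos_iff.2 hX
  have hYpos := List.length_pos_iff.2 hY
  rw [hXY, List.length_append] at hlen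
  rw [hXY', List.length_append] at hlen'
  obtain ⟨Y₀, A₀, hA, hY₀⟩ : ∃ Y₀ A₀, B h l = Y₀ ++ A₀ ∧ Y₀.length = Y.length :=
    ⟨(B h l).take Y.length, (B h l).drop Y.length, by simp, by simp; omega⟩
  have hlA := congrArg List.length hA
  rw [List.length_append] at hlA
  have hA₀ : A₀ ≠ [] := List.length_pos_iff.1 (by omega)
  obtain ⟨X₀, hs, hcov⟩ := (hA ▸ hB.cov_high).of_append_left hA₀
  have hX₀ := hcov.length_eq
  -- the beginning of a block that follows the letter `l` exceeds the end of the smallest block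
  have hlow : d = l → LexDiff R A₀ X' := by
    intro hdl
    obtain ⟨X₁, Y₁, hL, hX₁⟩ : ∃ X₁ Y₁, B l l = X₁ ++ Y₁ ∧ X₁.length = X'.length :=
      ⟨(B l l).take X'.length, (B l l).drop X'.length, by simp, by simp; omega⟩
    have hlL := congrArg List.length hL
    rw [List.length_append] at hlL
    obtain rfl : X₁ = X' := by
      subst hdl
      rcases he with rfl | rfl
      · exact (List.append_inj (hL.symm.trans hXY') hX₁).1
      · obtain ⟨Y₂, h2, -⟩ := (hL ▸ hB.cov_low).of_append_left
          (List.length_pos_iff.1 (by omega))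
        exact (List.append_inj (h2.symm.trans hXY') hX₁).1
    rcases hB.lyndon_low.prefix_le_of_isRotated hB.isRotated.symm hL hs (by omega) with h1 | h1
    · exact h1 ▸ hcov.lexDiff
    · exact hcov.lexDiff.trans h1.swap
  rw [hA]
  have hmin : ∀ Y', B l l = X ++ Y' → Y'.length = Y.length → Y₀ = Y' ∨ LexDiff R Y₀ Y' :=
    fun Y' h1 h2 =>
      hB.lyndon_high.prefix_le_of_isRotated hB.isRotated hs h1 (hY₀.trans h2.symm)
  have hfinish : d = l → (Y₀ = Y ∨ LexDiff R Y₀ Y) → LexDiff R (Y₀ ++ A₀) (Y ++ X') := by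
    rintro hdl (rfl | h1)
    · exact (hlow hdl).append_left Y₀
    · exact h1.append _ _
  rcases hd with hdl | hdh
  · refine hfinish hdl ?_
    rw [hdl] at hXY
    rcases hp with rfl | rfl
    · exact hmin Y hXY rfl
    · obtain ⟨Y₁, h1, h2⟩ := (hXY ▸ hB.cov_high).of_append_left hY
      have h3 := h2.length_eq
      exact h2.eq_or_lexDiff (by omega) (hB.lyndon_high.prefix_lexDiff_suffix h1 hs (by omega) hX
        (List.length_pos_iff.1 (by omega)))
  · rw [hdh] at hXY
    refine LexDiff.append _ _ ?_
    rcases hp with rfl | rfl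
    · obtain ⟨Y₁, h1, h2⟩ := (hXY ▸ hB.cov_low).of_append_right hY
      rcases hmin Y₁ h1 h2.length_eq with rfl | h3
      · exact h2.lexDiff
      · exact h3.trans h2.lexDiff
    · exact hB.lyndon_high.prefix_lexDiff_suffix hXY hs hY₀ hX hY

end IsBlockSystem

theorem getLastD_append (u v : List ℕ) (p : ℕ) :
    (u ++ v).getLastD p = v.getLastD (u.getLastD p) := by
  induction u generalizing p with
  | nil => rfl
  | cons a u ih => rw [List.cons_append, List.getLastD_cons, List.getLastD_cons, ih]

theorem phiAux_append (s : List ℕ) (p : ℕ) (u v : List ℕ) :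
    phiAux s p (u ++ v) = phiAux s p u ++ phiAux s (u.getLastD p) v := by
  induction u generalizing p with
  | nil => simp [phiAux]
  | cons a u ih => rw [List.cons_append, phiAux, phiAux, ih, List.getLastD_cons, List.append_assoc]

theorem exists_of_phiAux_eq_append {s : List ℕ} {p : ℕ} {r U V : List ℕ}
    (h : phiAux s p r = U ++ V) (hV : V ≠ []) :
    ∃ u d v X Y, r = u ++ d :: v ∧ phiBlock s (u.getLastD p) d = X ++ Y ∧ Y ≠ [] ∧
      U = phiAux s p u ++ X ∧ V = Y ++ phiAux s d v := by
  induction r generalizing p U with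
  | nil => exact absurd (List.append_eq_nil_iff.1 h.symm).2 hV
  | cons a r ih =>
    rw [phiAux, List.append_eq_append_iff] at h
    have hcons : ∀ W, phiAux s a r = W ++ V → U = phiBlock s p a ++ W →
        ∃ u d v X Y, a :: r = u ++ d :: v ∧ phiBlock s (u.getLastD p) d = X ++ Y ∧ Y ≠ [] ∧
          U = phiAux s p u ++ X ∧ V = Y ++ phiAux s d v := by
      intro W hW hU
      obtain ⟨u, d, v, X, Y, rfl, h1, h2, rfl, h4⟩ := ih hW
      exact ⟨a :: u, d, v, X, Y, by simp, by rwa [List.getLastD_cons], h2,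
        by rw [hU, phiAux, List.append_assoc], h4⟩
    rcases h with ⟨W, hU, hW⟩ | ⟨W, hU, hW⟩
    · exact hcons W hW hU
    · by_cases hWn : W = []
      · subst hWn
        exact hcons [] (by simpa using hW.symm) (by simpa using hU.symm)
      · exact ⟨[], a, r, U, W, rfl, by simpa using hU, hWn, by simp [phiAux], hW⟩

section LyndonFor

variable {R : ℕ → ℕ → Prop} [IsStrictTotalOrder ℕ R] {s r : List ℕ} {l h : ℕ}

theorem getLastD_eq_or {u : List ℕ} {p : ℕ} (hp : p = l ∨ p = h) (hu : ∀ d ∈ u, d = l ∨ d = h) :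
    u.getLastD p = l ∨ u.getLastD p = h := by
  induction u generalizing p with
  | nil => exact hp
  | cons a u ih =>
    rw [List.getLastD_cons]
    exact ih (hu a (by simp)) fun d hd => hu d (by simp [hd])

/-- A Lyndon word over two letters starts with the smaller and ends with the larger one. -/
theorem LyndonFor.exists_eq_cons_append (hr : LyndonFor R r) (hlh : R l h)
    (hd : ∀ d ∈ r, d = l ∨ d = h) (hlen : 2 ≤ r.length) : ∃ m, r = l :: (m ++ [h]) := by
  obtain ⟨a, r, rfl⟩ := List.exists_cons_of_length_pos (by omega : 0 < r.length)
  obtain ⟨m, b, rfl⟩ := List.eq_nil_or_concat' r |>.resolve_left (by rintro rfl; simp at hlen)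
  have h1 : LexDiff R [a] [b] := hr.prefix_lexDiff_suffix (u := a :: m) (v := [b])
    (u' := m ++ [b]) (by simp) (by simp) rfl (by simp) (by simp)
  have hab : R a b := by simpa [LexDiff] using h1
  have ha := hd a (by simp)
  have hb := hd b (by simp)
  rcases ha with rfl | rfl <;> rcases hb with rfl | rfl
  · exact absurd hab (irrefl_of R _)
  · exact ⟨m, rfl⟩
  · exact absurd (trans_of R hab hlh) (irrefl_of R _)
  · exact absurd hab (irrefl_of R _)

theorem LexDiff.phiAux (hB : IsBlockSystem R (phiBlock s) l h) : ∀ {x y : List ℕ} {p : ℕ},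
    LexDiff R x y → (p = l ∨ p = h) → (∀ d ∈ x, d = l ∨ d = h) → (∀ d ∈ y, d = l ∨ d = h) →
    LexDiff R (phiAux s p x) (phiAux s p y)
  | [], _, _, hxy, _, _, _ => by simp [LexDiff] at hxy
  | _ :: _, [], _, hxy, _, _, _ => by simp [LexDiff] at hxy
  | a :: x, b :: y, p, hxy, hp, hx, hy => by
    rcases hxy with hab | ⟨rfl, hxy⟩
    · refine LexDiff.append _ _ ?_
      rcases hx a (by simp) with rfl | rfl <;> rcases hy b (by simp) with rfl | rfl
      · exact absurd hab (irrefl_of R _)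
      · rcases hp with rfl | rfl
        · exact hB.cov_low.lexDiff
        · exact hB.cov_high.lexDiff
      · exact absurd (trans_of R hab hB.rel) (irrefl_of R _)
      · exact absurd hab (irrefl_of R _)
    · exact (LexDiff.phiAux hB hxy (hx a (by simp)) (fun d hd => hx d (by simp [hd]))
        (fun d hd => hy d (by simp [hd]))).append_left _

/-- The substitution attached to a block system preserves Lyndon words. -/
theorem LyndonFor.phiAux (hB : IsBlockSystem R (phiBlock s) l h) (hr : LyndonFor R r)
    (hd : ∀ d ∈ r, d = l ∨ d = h) (hlen : 2 ≤ r.length) : LyndonFor R (phiAux s h r) := by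
  intro U V hUV hU hV
  obtain ⟨m, hm⟩ := hr.exists_eq_cons_append hB.rel hd hlen
  have hfirst : _root_.phiAux s h r = phiBlock s h l ++ _root_.phiAux s l (m ++ [h]) := by
    rw [hm, _root_.phiAux]
  obtain ⟨u, d, v, X, Y, huv, hXY, hY, rfl, rfl⟩ := exists_of_phiAux_eq_append hUV hV
  have hlast : v.getLastD d = h := by
    have h1 : r.getLastD h = h := by
      rw [hm, List.getLastD_cons, getLastD_append, List.getLastD_cons, List.getLastD_nil]
    rwa [huv, getLastD_append, List.getLastD_cons] at h1
  have hu : ∀ e ∈ u, e = l ∨ e = h := fun e he => hd e (by simp [huv, he])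
  have hv : ∀ e ∈ v, e = l ∨ e = h := fun e he => hd e (by simp [huv, he])
  have hdd : d = l ∨ d = h := hd d (by simp [huv])
  have hcyc : _root_.phiAux s d v ++ _root_.phiAux s h u = _root_.phiAux s d (v ++ u) := by
    rw [phiAux_append, hlast]
  have hprev : u.getLastD h = l ∨ u.getLastD h = h := getLastD_eq_or (.inr rfl) hu
  rw [List.append_assoc, ← List.append_assoc (_root_.phiAux s d v), hcyc]
  by_cases hX : X = []
  · subst hX
    rw [List.nil_append] at hXY
    rw [List.append_nil, ← hXY]
    rcases hprev with hprev | hprev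
    · rw [hprev, hfirst]
      refine LexDiff.append _ _ ?_
      rcases hdd with rfl | rfl
      · exact hB.lexDiff_low
      · exact hB.lexDiff_low.trans hB.cov_low.lexDiff
    · rw [hprev]
      have h1 := hr u (d :: v) huv (by rintro rfl; simp [_root_.phiAux] at hU) (by simp)
      exact LexDiff.phiAux hB h1 (.inr rfl) hd
        fun e he => hd e (by simpa [huv, or_comm, or_left_comm] using he)
  · obtain ⟨e, w, hw⟩ := List.exists_cons_of_ne_nil (l := v ++ u) (by
      rintro h1
      rw [List.append_eq_nil_iff] at h1
      simp [huv, h1] at hlen)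
    have he : e = l ∨ e = h := by
      have : e ∈ v ++ u := by simp [hw]
      rcases List.mem_append.1 this with h1 | h1
      · exact hv e h1
      · exact hu e h1
    have hl1 := hB.length_eq hprev hdd
    have hl2 := hB.length_eq hdd he
    rw [hXY, List.length_append] at hl1
    have h1 := hB.lexDiff_straddle hprev hdd he hXY (List.take_append_drop X.length _).symm
      (by simp; omega) hX hY
    rw [hw, _root_.phiAux, hfirst, ← List.take_append_drop X.length (phiBlock s d e)]
    simpa only [List.append_assoc] using h1.append (_root_.phiAux s l (m ++ [h]))
      ((phiBlock s d e).drop X.length ++ (_root_.phiAux s e w ++ X))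

end LyndonFor

theorem wplus_append_singleton (u : List ℕ) (x : ℕ) : wplus (u ++ [x]) = u ++ [x + 1] := by
  simp [wplus]

theorem wminus_append_singleton (u : List ℕ) (x : ℕ) : wminus (u ++ [x]) = u ++ [x - 1] := by
  simp [wminus]

theorem wplus_append (u : List ℕ) {v : List ℕ} (hv : v ≠ []) : wplus (u ++ v) = u ++ wplus v := by
  obtain ⟨v, x, rfl⟩ := List.eq_nil_or_concat' v |>.resolve_left hv
  rw [← List.append_assoc, wplus_append_singleton, wplus_append_singleton, List.append_assoc]

theorem wminus_append (u : List ℕ) {v : List ℕ} (hv : v ≠ []) :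
    wminus (u ++ v) = u ++ wminus v := by
  obtain ⟨v, x, rfl⟩ := List.eq_nil_or_concat' v |>.resolve_left hv
  rw [← List.append_assoc, wminus_append_singleton, wminus_append_singleton, List.append_assoc]

theorem lastCovBy_wplus {w : List ℕ} (hw : w ≠ []) : LastCovBy (· < ·) w (wplus w) := by
  obtain ⟨v, x, rfl⟩ := List.eq_nil_or_concat' w |>.resolve_left hw
  exact ⟨v, x, x + 1, rfl, wplus_append_singleton v x, by simp, fun z hz => by omega⟩

theorem exists_eq_append_succ {s : List ℕ} (hs : s ∈ LyndonExt) : ∃ v x, s = v ++ [x + 1] := by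
  obtain ⟨hs, hs0⟩ := hs
  obtain ⟨hne, hL⟩ := isLyndon_iff.1 hs
  obtain ⟨v, x, rfl⟩ := List.eq_nil_or_concat' s |>.resolve_left hne
  suffices x ≠ 0 by
    obtain ⟨x, rfl⟩ := Nat.exists_eq_succ_of_ne_zero this
    exact ⟨v, x, rfl⟩
  rintro rfl
  rcases v with _ | ⟨a, v⟩
  · exact hs0 rfl
  · have h1 : LexDiff (· < ·) [a] [0] := hL.prefix_lexDiff_suffix (u := a :: v) (v := [0])
      (u' := v ++ [0]) rfl (by simp) rfl (by simp) (by simp)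
    simp [LexDiff] at h1

theorem maxCyc_ne_nil {w : List ℕ} (hw : w ≠ []) : maxCyc w ≠ [] := by
  have h := (isRotated_maxCyc_and_le hw).1.perm.length_eq
  have := List.length_pos_iff.2 hw
  exact List.length_pos_iff.1 (by omega)

theorem isBlockSystem_phiBlock {s : List ℕ} (hs : s ∈ LyndonExt) :
    IsBlockSystem (· < ·) (phiBlock s) 0 1 := by
  obtain ⟨hne, hL⟩ := isLyndon_iff.1 hs.1
  refine ⟨one_pos, hL, hL.maxCyc hne, (isRotated_maxCyc_and_le hne).1, ?_,
    lastCovBy_wplus (maxCyc_ne_nil hne)⟩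
  obtain ⟨v, x, rfl⟩ := exists_eq_append_succ hs
  exact ⟨v, x, x + 1, by simp [phiBlock, wminus_append_singleton], rfl, by simp,
    fun z hz => by omega⟩

theorem subst_zero_cons (s r : List ℕ) : subst s (0 :: r) = phiAux s 1 (0 :: r) := rfl

theorem subst_one_cons (s r : List ℕ) : subst s (1 :: r) = phiAux s 0 (1 :: r) := rfl

theorem LyndonBin.exists_eq_zero_cons {r : List ℕ} (hr : r ∈ LyndonBin) :
    ∃ m, r = 0 :: (m ++ [1]) :=
  (isLyndon_iff.1 hr.1).2.exists_eq_cons_append one_pos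
    (fun d hd => by have := hr.2.2 d hd; omega) hr.2.1

theorem maxCyc_digits {r : List ℕ} (hr : r ∈ LyndonBin) : ∀ d ∈ maxCyc r, d = 1 ∨ d = 0 := by
  intro d hd
  have := hr.2.2 d ((isRotated_maxCyc_and_le hr.1.1).1.mem_iff.2 hd)
  omega

theorem LyndonBin.exists_maxCyc_eq_one_cons {r : List ℕ} (hr : r ∈ LyndonBin) :
    ∃ m, maxCyc r = 1 :: (m ++ [0]) := by
  obtain ⟨hne, hL⟩ := isLyndon_iff.1 hr.1
  refine (hL.maxCyc hne).exists_eq_cons_append one_pos (maxCyc_digits hr) ?_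
  rw [← (isRotated_maxCyc_and_le hne).1.perm.length_eq]
  exact hr.2.1

theorem isRotated_phiAux_maxCyc (s : List ℕ) {r : List ℕ} (hr : r ∈ LyndonBin) :
    phiAux s 1 r ~r phiAux s 0 (maxCyc r) := by
  obtain ⟨m, hm⟩ := LyndonBin.exists_eq_zero_cons hr
  obtain ⟨m', hm'⟩ := LyndonBin.exists_maxCyc_eq_one_cons hr
  obtain ⟨u, v, huv, hvu⟩ := (isRotated_maxCyc_and_le hr.1.1).1.exists_append
  have hu : u ≠ [] := by
    rintro rfl
    simp_all
  have hv : v ≠ [] := by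
    rintro rfl
    simp_all
  obtain ⟨u, x, rfl⟩ := List.eq_nil_or_concat' u |>.resolve_left hu
  obtain ⟨v, y, rfl⟩ := List.eq_nil_or_concat' v |>.resolve_left hv
  obtain rfl : y = 1 := by
    have := congrArg (·.getLastD 0) (huv.symm.trans hm)
    simpa only [getLastD_append, List.getLastD_cons, List.getLastD_nil] using this
  obtain rfl : x = 0 := by
    have := congrArg (·.getLastD 0) (hvu.symm.trans hm')
    simpa only [getLastD_append, List.getLastD_cons, List.getLastD_nil] using this
  rw [hvu, huv, phiAux_append, phiAux_append s 0]
  simpa only [getLastD_append, List.getLastD_cons, List.getLastD_nil] using List.isRotated_append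

theorem length_phiAux_le {s : List ℕ} (hs : s ∈ LyndonExt) {r : List ℕ} {p : ℕ}
    (hp : p = 0 ∨ p = 1) (hr : ∀ d ∈ r, d = 0 ∨ d = 1) : r.length ≤ (phiAux s p r).length := by
  induction r generalizing p with
  | nil => simp
  | cons d r ih =>
    have hd := hr d (by simp)
    have h1 := (isBlockSystem_phiBlock hs).length_eq hp hd
    have h2 := (isBlockSystem_phiBlock hs).length_eq (.inr rfl) (.inr rfl)
    have h3 : 0 < (phiBlock s 1 1).length := List.length_pos_iff.2 hs.1.1
    have := ih hd fun e he => hr e (by simp [he])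
    rw [phiAux, List.length_append, List.length_cons]
    omega

theorem subst_mem_lyndonExt {s r : List ℕ} (hs : s ∈ LyndonExt) (hr : r ∈ LyndonBin) :
    subst s r ∈ LyndonExt := by
  obtain ⟨m, hm⟩ := LyndonBin.exists_eq_zero_cons hr
  have hd : ∀ d ∈ r, d = 0 ∨ d = 1 := fun d hd => by have := hr.2.2 d hd; omega
  have hlen := length_phiAux_le hs (.inr rfl) hd
  have h2 := hr.2.1
  have hL := (isLyndon_iff.1 hr.1).2.phiAux (isBlockSystem_phiBlock hs) hd h2
  have heq : subst s r = phiAux s 1 r := by rw [hm, subst_zero_cons]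
  rw [heq]
  refine ⟨isLyndon_iff.2 ⟨List.length_pos_iff.1 (by omega), hL⟩, fun h => ?_⟩
  rw [h, List.length_singleton] at hlen
  omega

theorem maxCyc_subst {s r : List ℕ} (hs : s ∈ LyndonExt) (hr : r ∈ LyndonBin) :
    maxCyc (subst s r) = subst s (maxCyc r) := by
  obtain ⟨m, hm⟩ := LyndonBin.exists_eq_zero_cons hr
  obtain ⟨m', hm'⟩ := LyndonBin.exists_maxCyc_eq_one_cons hr
  obtain ⟨hne, hL⟩ := isLyndon_iff.1 hr.1
  have h1 : subst s r = phiAux s 1 r := by rw [hm, subst_zero_cons]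
  have h2 : subst s (maxCyc r) = phiAux s 0 (maxCyc r) := by rw [hm', subst_one_cons]
  refine maxCyc_eq_of_isRotated (subst_mem_lyndonExt hs hr).1.1 ?_ ?_
  · rw [h1, h2]
    exact isRotated_phiAux_maxCyc s hr
  · rw [h2]
    exact (hL.maxCyc hne).phiAux (isBlockSystem_phiBlock hs).swap (maxCyc_digits hr)
      ((isRotated_maxCyc_and_le hne).1.perm.length_eq ▸ hr.2.1)

theorem wminus_phiBlock_one {s : List ℕ} (hs : s ∈ LyndonExt) (p : ℕ) :
    wminus (phiBlock s p 1) = phiBlock s p 0 := by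
  by_cases hp : p = 0
  · obtain ⟨v, x, hv⟩ := List.eq_nil_or_concat' (maxCyc s) |>.resolve_left
      (maxCyc_ne_nil hs.1.1)
    simp [phiBlock, hp, hv, wplus_append_singleton, wminus_append_singleton]
  · simp [phiBlock, hp]

theorem wplus_phiBlock_zero {s : List ℕ} (hs : s ∈ LyndonExt) (p : ℕ) :
    wplus (phiBlock s p 0) = phiBlock s p 1 := by
  by_cases hp : p = 0
  · simp [phiBlock, hp]
  · obtain ⟨v, x, rfl⟩ := exists_eq_append_succ hs
    simp [phiBlock, hp, wplus_append_singleton, wminus_append_singleton]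

theorem phiBlock_ne_nil {s : List ℕ} (hs : s ≠ []) (p d : ℕ) : phiBlock s p d ≠ [] := by
  have := maxCyc_ne_nil hs
  unfold phiBlock wminus wplus
  split_ifs <;> simp_all

theorem phiAux_append_singleton (s u : List ℕ) (p d : ℕ) :
    phiAux s p (u ++ [d]) = phiAux s p u ++ phiBlock s (u.getLastD p) d := by
  simp [phiAux_append, phiAux]

theorem wminus_phiAux {s : List ℕ} (hs : s ∈ LyndonExt) (u : List ℕ) (p : ℕ) :
    wminus (phiAux s p (u ++ [1])) = phiAux s p (u ++ [0]) := by
  rw [phiAux_append_singleton, phiAux_append_singleton, wminus_append _ (phiBlock_ne_nil hs.1.1 _ _),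
    wminus_phiBlock_one hs]

theorem wplus_phiAux {s : List ℕ} (hs : s ∈ LyndonExt) (u : List ℕ) (p : ℕ) :
    wplus (phiAux s p (u ++ [0])) = phiAux s p (u ++ [1]) := by
  rw [phiAux_append_singleton, phiAux_append_singleton, wplus_append _ (phiBlock_ne_nil hs.1.1 _ _),
    wplus_phiBlock_zero hs]

theorem phiBlock_subst {s r : List ℕ} (hs : s ∈ LyndonExt) (hr : r ∈ LyndonBin) {p d : ℕ}
    (hp : p = 0 ∨ p = 1) (hd : d = 0 ∨ d = 1) :
    phiBlock (subst s r) p d = phiAux s p (phiBlock r p d) ∧ (phiBlock r p d).getLastD p = d := by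
  have hmax := maxCyc_subst hs hr
  obtain ⟨m, hm⟩ := LyndonBin.exists_eq_zero_cons hr
  obtain ⟨m', hm'⟩ := LyndonBin.exists_maxCyc_eq_one_cons hr
  have h1 : subst s r = phiAux s 1 r := by rw [hm, subst_zero_cons]
  have h2 : subst s (maxCyc r) = phiAux s 0 (maxCyc r) := by rw [hm', subst_one_cons]
  rw [h2] at hmax
  rw [← List.cons_append] at hm hm'
  rcases hp with rfl | rfl <;> rcases hd with rfl | rfl
  · simp only [phiBlock, if_true]
    exact ⟨hmax, by rw [hm', getLastD_append]; rfl⟩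
  · simp only [phiBlock, if_true, one_ne_zero, if_false]
    rw [hmax, hm', wplus_append_singleton, wplus_phiAux hs, getLastD_append]
    exact ⟨rfl, rfl⟩
  · simp only [phiBlock, if_true, one_ne_zero, if_false]
    rw [h1, hm, wminus_append_singleton, wminus_phiAux hs, getLastD_append]
    exact ⟨rfl, rfl⟩
  · simp only [phiBlock, one_ne_zero, if_false]
    exact ⟨h1, by rw [hm, getLastD_append]; rfl⟩

theorem phiAux_subst {s r : List ℕ} (hs : s ∈ LyndonExt) (hr : r ∈ LyndonBin) {t : List ℕ}
    {p : ℕ} (hp : p = 0 ∨ p = 1) (ht : ∀ d ∈ t, d = 0 ∨ d = 1) :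
    phiAux (subst s r) p t = phiAux s p (phiAux r p t) := by
  induction t generalizing p with
  | nil => rfl
  | cons d t ih =>
    have hd := ht d (by simp)
    obtain ⟨h1, h2⟩ := phiBlock_subst hs hr hp hd
    rw [phiAux, phiAux, phiAux_append, h1, h2, ih hd fun e he => ht e (by simp [he])]

theorem subst_assoc {s r t : List ℕ} (hs : s ∈ LyndonExt) (hr : r ∈ LyndonBin)
    (ht : t ∈ LyndonBin) : subst (subst s r) t = subst s (subst r t) := by
  have hd : ∀ d ∈ t, d = 0 ∨ d = 1 := fun d hd => by have := ht.2.2 d hd; omega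
  have h := phiAux_subst hs hr (.inr rfl) hd
  obtain ⟨m, rfl⟩ := LyndonBin.exists_eq_zero_cons hr
  obtain ⟨n, rfl⟩ := LyndonBin.exists_eq_zero_cons ht
  rw [subst_zero_cons, h, subst_zero_cons (0 :: (m ++ [1])), phiAux]
  have hb : phiBlock (0 :: (m ++ [1])) 1 0 = 0 :: (m ++ [0]) := by
    simp only [phiBlock, if_true, one_ne_zero, if_false]
    rw [← List.cons_append, wminus_append_singleton, List.cons_append]
  rw [hb, List.cons_append, subst_zero_cons]

/-- For `s ∈ L_e`: (i) for any `r ∈ L`, the word `s • r` belongs to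
`L_e` and `L(s • r) = s • L(r)`; (ii) for any `r, t ∈ L`, `(s • r) • t = s • (r • t)`. -/
theorem subst_lyndon_and_assoc (s : List ℕ) (hs : s ∈ LyndonExt) :
    (∀ r ∈ LyndonBin, subst s r ∈ LyndonExt ∧ maxCyc (subst s r) = subst s (maxCyc r)) ∧
    (∀ r ∈ LyndonBin, ∀ t ∈ LyndonBin, subst (subst s r) t = subst s (subst r t)) := by
  exact ⟨fun r hr => ⟨subst_mem_lyndonExt hs hr, maxCyc_subst hs hr⟩,
    fun r hr t ht => subst_assoc hs hr ht⟩
end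

section
/- (i) The Farey intervals J^s, s ∈ F_e, are pairwise disjoint. (ii) For each S ∈ Λ_e, the intervals J^{S•r}, r ∈ F, are pairwise disjoint subintervals of J^S. (iii) The basic intervals I^S, S ∈ Λ_e, are pairwise disjoint. -/
open Set Filter MeasureTheory Topology

namespace FareyIntervals

/-- The `n`-fold left shift of an integer sequence. -/
def sh (n : ℕ) (x : ℕ → ℤ) : ℕ → ℤ := fun i => x (n + i)

/-- Lexicographic order on integer sequences. -/
def LexLE (x y : ℕ → ℤ) : Prop := ∀ n, (∀ i < n, x i = y i) → x n ≤ y n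

/-- Strict lexicographic order on integer sequences. -/
def LexLT (x y : ℕ → ℤ) : Prop := ∃ n, (∀ i < n, x i = y i) ∧ x n < y n

lemma sh_sh (a b : ℕ) (x : ℕ → ℤ) : sh a (sh b x) = sh (a + b) x := by
  funext i; simp only [sh]; congr 1; omega

lemma sh_zero (x : ℕ → ℤ) : sh 0 x = x := by
  funext i; simp [sh]

lemma LexLE.refl (x : ℕ → ℤ) : LexLE x x := fun _ _ => le_rfl

lemma exists_first_ne {x y : ℕ → ℤ} (h : x ≠ y) :
    ∃ n, (∀ i < n, x i = y i) ∧ x n ≠ y n := by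
  classical
  have h' : ∃ n, x n ≠ y n := by
    by_contra! hc; exact h (funext hc)
  exact ⟨Nat.find h', fun i hi => by simpa using Nat.find_min h' hi, Nat.find_spec h'⟩

lemma LexLE.eq_or_lt {x y : ℕ → ℤ} (h : LexLE x y) : x = y ∨ LexLT x y := by
  by_cases hxy : x = y
  · exact Or.inl hxy
  · obtain ⟨n, hn, hne⟩ := exists_first_ne hxy
    exact Or.inr ⟨n, hn, lt_of_le_of_ne (h n hn) hne⟩

lemma LexLT.le {x y : ℕ → ℤ} (h : LexLT x y) : LexLE x y := by
  obtain ⟨n, hn, hlt⟩ := h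
  intro k hk
  rcases lt_trichotomy k n with hkn | rfl | hkn
  · exact (hn k hkn).le
  · exact hlt.le
  · exact absurd (hk n hkn) hlt.ne

lemma LexLE.antisymm {x y : ℕ → ℤ} (h : LexLE x y) (h' : LexLE y x) : x = y := by
  by_contra hxy
  obtain ⟨n, hn, hne⟩ := exists_first_ne hxy
  exact hne (le_antisymm (h n hn) (h' n fun i hi => (hn i hi).symm))

lemma LexLT.irrefl {x : ℕ → ℤ} (h : LexLT x x) : False := by
  obtain ⟨n, -, hlt⟩ := h
  exact lt_irrefl _ hlt

lemma LexLE.neg {x y : ℕ → ℤ} (h : LexLE x y) : LexLE (-y) (-x) := by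
  intro n hn
  have := h n fun i hi => by have := hn i hi; simp only [Pi.neg_apply] at this; omega
  simpa using this

lemma LexLT.of_neg {x y : ℕ → ℤ} (h : LexLT (-x) (-y)) : LexLT y x := by
  obtain ⟨n, hn, hlt⟩ := h
  refine ⟨n, fun i hi => ?_, by simpa using hlt⟩
  have := hn i hi
  simp only [Pi.neg_apply] at this
  omega

lemma sh_neg (j : ℕ) (x : ℕ → ℤ) : sh j (-x) = -sh j x := rfl

lemma LexLE.sh_of_eq {x y : ℕ → ℤ} (h : LexLE x y) {n : ℕ} (hn : ∀ i < n, x i = y i) :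
    LexLE (sh n x) (sh n y) := by
  intro k hk
  refine h (n + k) fun i hi => ?_
  rcases lt_or_ge i n with hin | hin
  · exact hn i hin
  · have := hk (i - n) (by omega)
    simpa only [sh, Nat.add_sub_of_le hin] using this

lemma LexLE.of_sum_le {x y : ℕ → ℤ}
    (h : ∀ n, ∑ i ∈ Finset.range n, x i ≤ ∑ i ∈ Finset.range n, y i) : LexLE x y := by
  intro n hn
  have h1 := h (n + 1)
  rw [Finset.sum_range_succ, Finset.sum_range_succ,
    Finset.sum_congr rfl fun i hi => hn i (Finset.mem_range.1 hi)] at h1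
  linarith

lemma LexLT.of_prefix {x y : ℕ → ℤ} {n : ℕ}
    (h : ∀ k < n, (∀ i < k, x i = y i) → x k ≤ y k)
    (hn : (∀ i < n, x i = y i) → x n < y n) : LexLT x y := by
  by_cases hall : ∀ i < n, x i = y i
  · exact ⟨n, hall, hn hall⟩
  · have hne : x ≠ y := by rintro rfl; exact hall fun _ _ => rfl
    obtain ⟨k, hk, hkne⟩ := exists_first_ne hne
    have hkn : k < n := by
      by_contra hc
      exact hall fun i hi => hk i (by omega)
    exact ⟨k, hk, lt_of_le_of_ne (h k hkn hk) hkne⟩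

/-! ### Expansions of `1` in real bases -/

/-- `Σ x_i β^{-(i+1)}` for an integer sequence. -/
noncomputable def valZ (β : ℝ) (x : ℕ → ℤ) : ℝ := ∑' i : ℕ, (x i : ℝ) / β ^ (i + 1)

/-- `β > 1` is a base in which `x` is an expansion of `1`. -/
def IsBase (x : ℕ → ℤ) (β : ℝ) : Prop := 1 < β ∧ valZ β x = 1

/-- The base in which `x` is an expansion of `1`. -/
noncomputable def baseOf (x : ℕ → ℤ) : ℝ := Classical.epsilon (IsBase x)

/-- Bounded nonnegative digit sequences. -/
structure Digits (x : ℕ → ℤ) : Prop where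
  nonneg : ∀ i, 0 ≤ x i
  bdd : ∃ B, ∀ i, x i ≤ B

/-- Bounded nonnegative digit sequences with positive first digit and no zero tail. -/
structure Nice (x : ℕ → ℤ) : Prop extends Digits x where
  pos : 0 < x 0
  tail : ∀ n, ∃ i, 0 < x (n + i)

lemma Digits.sh {x : ℕ → ℤ} (h : Digits x) (n : ℕ) : Digits (sh n x) :=
  ⟨fun _ => h.nonneg _, h.bdd.imp fun _ hB _ => hB _⟩

lemma summable_geom {β : ℝ} (hβ : 1 < β) (B : ℝ) :
    Summable fun i : ℕ => B / β ^ (i + 1) := by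
  have h := (summable_geometric_of_lt_one (r := β⁻¹) (by positivity)
    (inv_lt_one_of_one_lt₀ hβ)).mul_left (B / β)
  refine h.congr fun i => ?_
  rw [inv_pow, pow_succ]
  field_simp

lemma tsum_geom {β : ℝ} (hβ : 1 < β) (B : ℝ) :
    ∑' i : ℕ, B / β ^ (i + 1) = B / (β - 1) := by
  have h := tsum_geometric_of_lt_one (r := β⁻¹) (by positivity)
    (inv_lt_one_of_one_lt₀ hβ)
  have h1 : ∀ i : ℕ, B / β ^ (i + 1) = (B / β) * β⁻¹ ^ i := fun i => by
    rw [inv_pow, pow_succ]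
    field_simp
  rw [tsum_congr h1, tsum_mul_left, h]
  have : β - 1 ≠ 0 := by linarith
  have : β ≠ 0 := by linarith
  field_simp

lemma Digits.term_nonneg {x : ℕ → ℤ} (h : Digits x) {β : ℝ} (hβ : 1 < β) (i : ℕ) :
    0 ≤ (x i : ℝ) / β ^ (i + 1) := by
  have : (0 : ℝ) ≤ x i := by exact_mod_cast h.nonneg i
  positivity

lemma Digits.summable {x : ℕ → ℤ} (h : Digits x) {β : ℝ} (hβ : 1 < β) :
    Summable fun i : ℕ => (x i : ℝ) / β ^ (i + 1) := by
  obtain ⟨B, hB⟩ := h.bdd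
  refine Summable.of_nonneg_of_le (h.term_nonneg hβ) (fun i => ?_) (summable_geom hβ B)
  gcongr
  exact_mod_cast hB i

lemma Digits.valZ_nonneg {x : ℕ → ℤ} (h : Digits x) {β : ℝ} (hβ : 1 < β) : 0 ≤ valZ β x :=
  tsum_nonneg (h.term_nonneg hβ)

lemma Digits.valZ_pos {x : ℕ → ℤ} (h : Digits x) {β : ℝ} (hβ : 1 < β) {j : ℕ} (hj : 0 < x j) :
    0 < valZ β x := by
  refine (h.summable hβ).tsum_pos (h.term_nonneg hβ) j ?_
  have : (0 : ℝ) < x j := by exact_mod_cast hj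
  positivity

lemma Digits.valZ_le {x : ℕ → ℤ} (h : Digits x) {β : ℝ} (hβ : 1 < β) {B : ℤ}
    (hB : ∀ i, x i ≤ B) : valZ β x ≤ B / (β - 1) := by
  rw [← tsum_geom hβ]
  refine (h.summable hβ).tsum_le_tsum (fun i => ?_) (summable_geom hβ B)
  gcongr
  exact_mod_cast hB i

lemma Digits.valZ_split {x : ℕ → ℤ} (h : Digits x) {β : ℝ} (hβ : 1 < β) (n : ℕ) :
    valZ β x = ∑ i ∈ Finset.range n, (x i : ℝ) / β ^ (i + 1)
      + valZ β (FareyIntervals.sh n x) / β ^ n := by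
  rw [valZ, ← (h.summable hβ).sum_add_tsum_nat_add n]
  congr 1
  rw [valZ, ← tsum_div_const]
  refine tsum_congr fun i => ?_
  rw [div_div, ← pow_add]
  simp only [FareyIntervals.sh]
  congr 2
  · rw [add_comm]
  · ring

lemma Digits.valZ_anti {x : ℕ → ℤ} (h : Digits x) {β γ : ℝ} (hβ : 1 < β) (hle : β ≤ γ) :
    valZ γ x ≤ valZ β x := by
  refine (h.summable (hβ.trans_le hle)).tsum_le_tsum (fun i => ?_) (h.summable hβ)
  have : (0 : ℝ) ≤ x i := by exact_mod_cast h.nonneg i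
  gcongr

/-- Comparison of the values of two sequences at their first difference. -/
lemma valZ_sub_le {x y : ℕ → ℤ} (hx : Digits x) (hy : Digits y) {β : ℝ} (hβ : 1 < β) {n : ℕ}
    (heq : ∀ i < n, x i = y i) (hlt : x n < y n) :
    valZ β x - valZ β y ≤ (valZ β (sh (n + 1) x) - valZ β (sh (n + 1) y) - 1) / β ^ (n + 1) := by
  rw [hx.valZ_split hβ (n + 1), hy.valZ_split hβ (n + 1), Finset.sum_range_succ,
    Finset.sum_range_succ, Finset.sum_congr rfl fun i hi => by rw [heq i (Finset.mem_range.1 hi)]]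
  have hd : (x n : ℝ) + 1 ≤ y n := by exact_mod_cast hlt
  have hd' : (x n : ℝ) / β ^ (n + 1) + 1 / β ^ (n + 1) ≤ y n / β ^ (n + 1) := by
    rw [← add_div]; gcongr
  rw [sub_div, sub_div]
  linarith

lemma valZ_le_one {x y : ℕ → ℤ} (hx : Digits x) (hy : Digits y) {β : ℝ} (hβ : 1 < β)
    (hy1 : valZ β y = 1) (h : ∀ n, LexLE (sh n x) y) : valZ β x ≤ 1 := by
  obtain ⟨B, hB⟩ := hx.bdd
  have hB0 : (0 : ℝ) ≤ B := by exact_mod_cast (hx.nonneg 0).trans (hB 0)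
  have key : ∀ N n : ℕ, valZ β (sh n x) ≤ 1 + (B / (β - 1)) / β ^ N := by
    intro N
    induction N with
    | zero =>
      intro n
      have := (hx.sh n).valZ_le hβ (fun _ => hB _)
      simp only [pow_zero, div_one]
      linarith
    | succ N ih =>
      intro n
      have hnn : 0 ≤ (B : ℝ) / (β - 1) := div_nonneg hB0 (by linarith)
      rcases (h n).eq_or_lt with heq | ⟨k, hk, hlt⟩
      · rw [heq, hy1]
        have : 0 ≤ (B / (β - 1)) / β ^ (N + 1) := by positivity
        linarith
      · have h1 := valZ_sub_le (hx.sh n) hy hβ hk hlt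
        rw [hy1, sh_sh] at h1
        have h2 := ih (k + 1 + n)
        have h3 := (hy.sh (k + 1)).valZ_nonneg hβ
        have h4 : (valZ β (sh (k + 1 + n) x) - valZ β (sh (k + 1) y) - 1) / β ^ (k + 1)
            ≤ ((B / (β - 1)) / β ^ N) / β ^ (k + 1) := by
          gcongr; linarith
        have h5 : ((B / (β - 1)) / β ^ N) / β ^ (k + 1) ≤ ((B / (β - 1)) / β ^ N) / β ^ 1 := by
          have : β ^ 1 ≤ β ^ (k + 1) := pow_le_pow_right₀ hβ.le (by omega)
          gcongr
        have h6 : ((B / (β - 1)) / β ^ N) / β ^ 1 = (B / (β - 1)) / β ^ (N + 1) := by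
          rw [div_div, ← pow_add]
        linarith
  have hlim : Tendsto (fun N : ℕ => 1 + (B / (β - 1)) / β ^ N) atTop (𝓝 (1 + 0)) :=
    tendsto_const_nhds.add (Tendsto.const_div_atTop (tendsto_pow_atTop_atTop_of_one_lt hβ) _)
  rw [add_zero] at hlim
  have := ge_of_tendsto' hlim fun N => key N 0
  rwa [sh_zero] at this

lemma IsBase.lt {x y : ℕ → ℤ} (hx : Nice x) (hy : Nice y) {β γ : ℝ} (hβ : IsBase x β)
    (hγ : IsBase y γ) (h : ∀ n, LexLE (sh n x) y) (hlt : LexLT x y) : β < γ := by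
  by_contra! hle
  have h1 := hx.toDigits.valZ_anti hγ.1 hle
  rw [hβ.2] at h1
  obtain ⟨n, hn, hlt⟩ := hlt
  have h2 := valZ_sub_le hx.toDigits hy.toDigits hγ.1 hn hlt
  have h3 : valZ γ (sh (n + 1) x) ≤ 1 :=
    valZ_le_one (hx.toDigits.sh _) hy.toDigits hγ.1 hγ.2 fun k => by rw [sh_sh]; exact h _
  obtain ⟨j, hj⟩ := hy.tail (n + 1)
  have h4 : 0 < valZ γ (sh (n + 1) y) := (hy.toDigits.sh (n + 1)).valZ_pos hγ.1 hj
  have hγ0 : 0 < γ := by linarith [hγ.1]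
  have h5 : (valZ γ (sh (n + 1) x) - valZ γ (sh (n + 1) y) - 1) / γ ^ (n + 1) < 0 :=
    div_neg_of_neg_of_pos (by linarith) (by positivity)
  rw [hγ.2] at h2
  linarith

lemma Nice.exists_base {x : ℕ → ℤ} (hx : Nice x) : ∃ β, IsBase x β := by
  obtain ⟨B, hB⟩ := hx.bdd
  have hB1 : (1 : ℝ) ≤ B := by exact_mod_cast (show (1 : ℤ) ≤ B from hx.pos.trans_le (hB 0))
  obtain ⟨j, hj⟩ := hx.tail 1
  have hx0 : (1 : ℝ) ≤ x 0 := by exact_mod_cast hx.pos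
  have hxj : (1 : ℝ) ≤ x (1 + j) := by exact_mod_cast hj
  obtain ⟨a, ha1, ha2, hab⟩ : ∃ a : ℝ, 1 < a ∧ 1 < 1 / a + 1 / a ^ (1 + j + 1) ∧ a ≤ B + 1 := by
    have hcont : Tendsto (fun a : ℝ => 1 / a + 1 / a ^ (1 + j + 1)) (𝓝[>] 1)
        (𝓝 (1 / 1 + 1 / 1 ^ (1 + j + 1))) := by
      have hc : ContinuousAt (fun a : ℝ => 1 / a + 1 / a ^ (1 + j + 1)) 1 := by
        refine ContinuousAt.add ?_ ?_
        · exact continuousAt_const.div continuousAt_id one_ne_zero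
        · exact continuousAt_const.div (continuousAt_id.pow _) (by simp)
      exact hc.tendsto.mono_left nhdsWithin_le_nhds
    have h1 : ∀ᶠ a in 𝓝[>] (1 : ℝ), 1 < 1 / a + 1 / a ^ (1 + j + 1) :=
      hcont.eventually (lt_mem_nhds (by norm_num))
    have h2 : ∀ᶠ a : ℝ in 𝓝[>] 1, a ≤ B + 1 :=
      (eventually_le_nhds (show (1 : ℝ) < B + 1 by linarith)).filter_mono nhdsWithin_le_nhds
    obtain ⟨a, ⟨h, h'⟩, h''⟩ := ((h1.and h2).and self_mem_nhdsWithin).exists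
    exact ⟨a, h'', h, h'⟩
  have hcont : ContinuousOn (fun β => valZ β x) (Set.Icc a (B + 1)) := by
    refine continuousOn_tsum (u := fun i => B / a ^ (i + 1)) (fun i => ?_) (summable_geom ha1 B)
      fun i β hβ => ?_
    · refine continuousOn_const.div (continuousOn_id.pow _) fun β hβ => ?_
      have : 0 < β := by linarith [hβ.1]
      exact pow_ne_zero _ this.ne'
    · have hβ1 : 1 < β := ha1.trans_le hβ.1
      rw [Real.norm_of_nonneg (hx.toDigits.term_nonneg hβ1 i)]
      have h1 : (x i : ℝ) ≤ B := by exact_mod_cast hB i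
      have h0 : (0 : ℝ) ≤ x i := by exact_mod_cast hx.nonneg i
      have := hβ.1
      gcongr
  have hlow : valZ (B + 1) x ≤ 1 := by
    have := hx.toDigits.valZ_le (β := B + 1) (by linarith) hB
    rwa [add_sub_cancel_right, div_self (by linarith)] at this
  have hhigh : 1 ≤ valZ a x := by
    have h1 := (hx.toDigits.summable ha1).sum_le_tsum {0, 1 + j}
      (fun i _ => hx.toDigits.term_nonneg ha1 i)
    rw [Finset.sum_pair (by omega)] at h1
    have h2 : 1 / a ≤ x 0 / a ^ (0 + 1) := by rw [zero_add, pow_one]; gcongr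
    have h3 : 1 / a ^ (1 + j + 1) ≤ x (1 + j) / a ^ (1 + j + 1) := by gcongr
    have : valZ a x = ∑' i : ℕ, (x i : ℝ) / a ^ (i + 1) := rfl
    linarith
  obtain ⟨β, hβ, hval⟩ := intermediate_value_Icc' hab hcont ⟨hlow, hhigh⟩
  exact ⟨β, ha1.trans_le hβ.1, hval⟩

lemma Nice.baseOf_lt {x y : ℕ → ℤ} (hx : Nice x) (hy : Nice y)
    (h : ∀ n, LexLE (sh n x) y) (hlt : LexLT x y) : baseOf x < baseOf y :=
  IsBase.lt hx hy (Classical.epsilon_spec hx.exists_base) (Classical.epsilon_spec hy.exists_base)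
    h hlt

/-! ### Extremal pairs and the substitution on sequences -/

/-- `s` and `l` are `m`-periodic with least period `m`, and every shift of `s` or `l` lies
between `s` and `l`. -/
structure Good (m : ℕ) (s l : ℕ → ℤ) : Prop where
  pos : 0 < m
  per_s : ∀ i, s (i + m) = s i
  per_l : ∀ i, l (i + m) = l i
  ss : ∀ j, LexLE s (sh j s)
  sl : ∀ j, LexLE (sh j s) l
  ls : ∀ j, LexLE s (sh j l)
  ll : ∀ j, LexLE (sh j l) l
  prim_s : ∀ j, sh j s = s → m ∣ j
  prim_l : ∀ j, sh j l = l → m ∣ j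

/-- `c` takes values in `{0, 1}`. -/
def Binary (c : ℕ → ℤ) : Prop := ∀ i, c i = 0 ∨ c i = 1

/-- The substitution associated with a pair `(s, l)` of `m`-periodic sequences, applied to a
sequence `c` of states: a transition from state `0` emits `l`, a transition from state `1` emits
`s`, and the last letter of the block is changed by the difference of the two states. -/
def psi (m : ℕ) (s l c : ℕ → ℤ) : ℕ → ℤ :=
  fun i => (if c (i / m) = 0 then l i else s i) + (c ((i + 1) / m) - c (i / m))

lemma Binary.sh {c : ℕ → ℤ} (h : Binary c) (n : ℕ) : Binary (sh n c) := fun _ => h _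

lemma add_mul_of_periodic {x : ℕ → ℤ} {m : ℕ} (h : ∀ i, x (i + m) = x i) (k i : ℕ) :
    x (k * m + i) = x i := by
  induction k with
  | zero => simp
  | succ k ih => rw [← ih, ← h (k * m + i)]; congr 1; ring

lemma mod_of_periodic {x : ℕ → ℤ} {m : ℕ} (h : ∀ i, x (i + m) = x i) (i : ℕ) :
    x (i % m) = x i := by
  conv_rhs => rw [← Nat.div_add_mod' i m, add_mul_of_periodic h]

namespace Good

variable {m : ℕ} {s l : ℕ → ℤ}

lemma dual (h : Good m s l) : Good m (-l) (-s) where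
  pos := h.pos
  per_s i := by simp [h.per_l]
  per_l i := by simp [h.per_s]
  ss j := (h.ll j).neg
  sl j := (h.ls j).neg
  ls j := (h.sl j).neg
  ll j := (h.ss j).neg
  prim_s j hj := h.prim_l j (neg_injective hj)
  prim_l j hj := h.prim_s j (neg_injective hj)

lemma sh_psi (h : Good m s l) (k : ℕ) (c : ℕ → ℤ) :
    sh (k * m) (psi m s l c) = psi m s l (sh k c) := by
  funext i
  have h1 : (k * m + i) / m = k + i / m := by
    rw [add_comm, Nat.add_mul_div_right _ _ h.pos, add_comm]
  have h2 : (k * m + i + 1) / m = k + (i + 1) / m := by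
    rw [show k * m + i + 1 = i + 1 + k * m by ring, Nat.add_mul_div_right _ _ h.pos, add_comm]
  simp only [sh, psi, h1, h2, add_mul_of_periodic h.per_s, add_mul_of_periodic h.per_l]
  rfl

lemma psi_dual {c : ℕ → ℤ} (hc : Binary c) :
    psi m (-l) (-s) (fun i => 1 - c i) = -psi m s l c := by
  funext i
  simp only [psi, Pi.neg_apply]
  rcases hc (i / m) with h | h <;> simp [h] <;> ring

lemma psi_of_lt {c : ℕ → ℤ} {i : ℕ} (hi : i + 1 < m) :
    psi m s l c i = if c 0 = 0 then l i else s i := by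
  simp [psi, Nat.div_eq_of_lt hi, Nat.div_eq_of_lt (Nat.lt_of_succ_lt hi)]

lemma psi_last (h : Good m s l) {c : ℕ → ℤ} {i : ℕ} (hi : i + 1 = m) :
    psi m s l c i = (if c 0 = 0 then l i else s i) + (c 1 - c 0) := by
  simp only [psi, Nat.div_eq_of_lt (show i < m by omega), hi, Nat.div_self h.pos]

lemma psi_add_of_lt (h : Good m s l) {c : ℕ → ℤ} {i : ℕ} (hi : i + 1 < m) :
    psi m s l c (m + i) = if c 1 = 0 then l i else s i := by
  have := congrFun (h.sh_psi 1 c) i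
  rw [one_mul, psi_of_lt hi] at this
  exact this

/-- A proper suffix of the block `l` is strictly smaller than the prefix of the same length. -/
lemma exists_lt_prefix (h : Good m s l) {j : ℕ} (hj : 0 < j) (hjm : j < m) :
    ∃ n < m - j, (∀ i < n, l (j + i) = l i) ∧ l (j + n) < l n := by
  rcases (h.ll j).eq_or_lt with heq | ⟨n, hn, hlt⟩
  · exact absurd (Nat.le_of_dvd hj (h.prim_l j heq)) (by omega)
  · rcases lt_or_ge n (m - j) with hnm | hnm
    · exact ⟨n, hnm, hn, hlt⟩
    · exfalso
      have h1 := (h.ll j).sh_of_eq (n := m - j) fun i hi => hn i (by omega)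
      have h2 : sh (m - j) (sh j l) = l := by
        funext i
        rw [sh_sh, Nat.sub_add_cancel hjm.le]
        simp only [sh]
        rw [add_comm, h.per_l]
      rw [h2] at h1
      have := Nat.le_of_dvd (by omega) (h.prim_l (m - j) ((h.ll (m - j)).antisymm h1))
      omega

lemma psi_lt_of_aligned (h : Good m s l) {c b : ℕ → ℤ} (hc : Binary c)
    (hb0 : b 0 = 0) (hb1 : b 1 = 1) (hle : LexLE (sh 1 c) (sh 1 b)) :
    c = b ∨ LexLT (psi m s l c) (psi m s l b) := by
  have hm := h.pos
  rcases hc 0 with h0 | h0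
  · by_cases hcb : c = b
    · exact Or.inl hcb
    right
    obtain ⟨N, hN, hne⟩ := exists_first_ne hcb
    obtain ⟨N, rfl⟩ : ∃ N', N = N' + 1 := by
      refine Nat.exists_eq_succ_of_ne_zero ?_
      rintro rfl
      exact hne (h0.trans hb0.symm)
    have hlt : c (N + 1) < b (N + 1) := by
      refine lt_of_le_of_ne ?_ hne
      have := hle N fun i hi => by
        simp only [sh]; exact hN _ (by omega)
      simpa only [sh, add_comm] using this
    have hq : (N + 1) * m - 1 + 1 = (N + 1) * m :=
      Nat.sub_add_cancel (Nat.mul_pos N.succ_pos hm)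
    refine ⟨(N + 1) * m - 1, fun i hi => ?_, ?_⟩
    · have h1 : (i + 1) / m < N + 1 := (Nat.div_lt_iff_lt_mul hm).2 (by omega)
      have h2 : i / m < N + 1 := (Nat.div_lt_iff_lt_mul hm).2 (by omega)
      simp only [psi, hN _ h1, hN _ h2]
    · have h1 : ((N + 1) * m - 1) / m < N + 1 := (Nat.div_lt_iff_lt_mul hm).2 (by omega)
      simp only [psi, hN _ h1, hq, Nat.mul_div_cancel _ hm]
      linarith
  · right
    have hsl := h.sl 0
    rw [sh_zero] at hsl
    have hlow : ∀ i, i + 1 < m → psi m s l c i = s i ∧ psi m s l b i = l i := fun i hi => by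
      simp [psi_of_lt hi, h0, hb0]
    refine LexLT.of_prefix (n := m - 1) (fun k hk hpre => ?_) fun hpre => ?_
    · rw [(hlow k (by omega)).1, (hlow k (by omega)).2]
      refine hsl k fun i hi => ?_
      have := hpre i hi
      rwa [(hlow i (by omega)).1, (hlow i (by omega)).2] at this
    · have hle' := hsl (m - 1) fun i hi => by
        have := hpre i hi
        rwa [(hlow i (by omega)).1, (hlow i (by omega)).2] at this
      rw [h.psi_last (by omega), h.psi_last (by omega), h0, hb0, hb1]
      rcases hc 1 with h1 | h1 <;> simp [h1] <;> omega

lemma psi_lt_of_not_aligned (h : Good m s l) {c b : ℕ → ℤ} (hc : Binary c)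
    (hb0 : b 0 = 0) (hb1 : b 1 = 1) {j : ℕ} (hj : 0 < j) (hjm : j < m) :
    LexLT (sh j (psi m s l c)) (psi m s l b) := by
  obtain ⟨n, hnm, hn, hlt⟩ := h.exists_lt_prefix hj hjm
  have hb : ∀ i, i + 1 < m → psi m s l b i = l i := fun i hi => by
    simp [psi_of_lt hi, hb0]
  have hblast : psi m s l b (m - 1) = l (m - 1) + 1 := by
    simp [h.psi_last (show m - 1 + 1 = m by omega), hb0, hb1]
  -- digits of the shifted sequence inside the first block
  have hfst : ∀ i, j + i + 1 < m → sh j (psi m s l c) i =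
      if c 0 = 0 then l (j + i) else s (j + i) :=
    fun i hi => psi_of_lt hi
  have hlst : sh j (psi m s l c) (m - j - 1) =
      (if c 0 = 0 then l (j + (m - j - 1)) else s (j + (m - j - 1))) + (c 1 - c 0) :=
    h.psi_last (by omega)
  -- comparison inside the first block
  have hblock : ∀ k, k < m - j → (∀ i < k, sh j (psi m s l c) i = l i) →
      sh j (psi m s l c) k ≤ l k + (c 1 - 1) * (if k = m - j - 1 then 1 else 0) := by
    intro k hk hpre
    rcases hc 0 with h0 | h0
    · have hkn : k ≤ n := by
        by_contra! hc'
        have := hpre n hc'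
        rw [hfst n (by omega), if_pos h0] at this
        omega
      by_cases hkl : k = m - j - 1
      · obtain rfl : k = n := by omega
        rw [hkl, hlst, if_pos h0, if_pos rfl, ← hkl, h0]
        omega
      · rw [hfst k (by omega), if_pos h0, if_neg hkl]
        rcases hkn.lt_or_eq with hkn | rfl
        · linarith [hn k hkn]
        · linarith
    · have hsl := h.sl j k fun i hi => by
        have := hpre i hi
        rwa [hfst i (by omega), if_neg (by omega)] at this
      simp only [sh] at hsl
      by_cases hkl : k = m - j - 1
      · rw [hkl, hlst, if_neg (by omega), if_pos rfl, ← hkl, h0]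
        omega
      · rw [hfst k (by omega), if_neg (by omega), if_neg hkl]
        linarith
  rcases hc 1 with h1 | h1
  · refine LexLT.of_prefix (n := m - j - 1) (fun k hk hpre => ?_) fun hpre => ?_
    · have := hblock k (by omega) fun i hi => by rw [hpre i hi, hb i (by omega)]
      rw [if_neg (by omega)] at this
      rw [hb k (by omega)]
      linarith
    · have := hblock (m - j - 1) (by omega) fun i hi => by rw [hpre i hi, hb i (by omega)]
      rw [if_pos rfl, h1] at this
      rw [hb _ (by omega)]
      linarith
  · have hsnd : ∀ i, i < j → sh j (psi m s l c) (m - j + i) = s i := fun i hi => by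
      have := h.psi_add_of_lt (c := c) (i := i) (by omega)
      rw [if_neg (by omega)] at this
      rw [← this]
      simp only [sh]
      congr 1
      omega
    have htail : ∀ k, m - j ≤ k → k < m → (∀ i < k, sh j (psi m s l c) i = psi m s l b i) →
        sh j (psi m s l c) k ≤ l k := by
      intro k hk hkm hpre
      have hls := h.ls (m - j) (k - (m - j)) fun i hi => by
        have := hpre (m - j + i) (by omega)
        rwa [hsnd i (by omega), hb _ (by omega)] at this
      have := hsnd (k - (m - j)) (by omega)
      simp only [sh] at hls
      rw [show m - j + (k - (m - j)) = k by omega] at this hls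
      rwa [this]
    refine LexLT.of_prefix (n := m - 1) (fun k hk hpre => ?_) fun hpre => ?_
    · rw [hb k (by omega)]
      rcases lt_or_ge k (m - j) with hkj | hkj
      · have := hblock k hkj fun i hi => by rw [hpre i hi, hb i (by omega)]
        rw [h1] at this
        linarith
      · exact htail k hkj (by omega) hpre
    · rw [hblast]
      linarith [htail (m - 1) (by omega) (by omega) hpre]

/-- All shifts of `psi c` lie below `psi b` if all shifts of `c` lie below `b`. -/
lemma sh_psi_lt (h : Good m s l) {c b : ℕ → ℤ} (hc : Binary c)
    (hb0 : b 0 = 0) (hb1 : b 1 = 1) (hle : ∀ k, LexLE (sh (k + 1) c) (sh 1 b)) (n : ℕ) :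
    (∃ k, n = k * m ∧ sh k c = b) ∨ LexLT (sh n (psi m s l c)) (psi m s l b) := by
  have hn : sh n (psi m s l c) = sh (n % m) (psi m s l (sh (n / m) c)) := by
    rw [← h.sh_psi, sh_sh, Nat.mod_add_div']
  rw [hn]
  rcases Nat.eq_zero_or_pos (n % m) with h0 | h0
  · rw [h0, sh_zero]
    refine (h.psi_lt_of_aligned (hc.sh (n / m)) hb0 hb1 ?_).imp_left fun heq =>
      ⟨n / m, (Nat.div_mul_cancel (Nat.dvd_of_mod_eq_zero h0)).symm, heq⟩
    rw [sh_sh, add_comm]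
    exact hle _
  · exact Or.inr (h.psi_lt_of_not_aligned (hc.sh _) hb0 hb1 h0 (Nat.mod_lt _ h.pos))

lemma psi_lt_sh (h : Good m s l) {c b : ℕ → ℤ} (hc : Binary c) (hb : Binary b)
    (hb0 : b 0 = 1) (hb1 : b 1 = 0) (hle : ∀ k, LexLE (sh 1 b) (sh (k + 1) c)) (n : ℕ) :
    (∃ k, n = k * m ∧ sh k c = b) ∨ LexLT (psi m s l b) (sh n (psi m s l c)) := by
  have hflip : ∀ {x y : ℕ → ℤ}, LexLE x y → LexLE (fun i => 1 - y i) (fun i => 1 - x i) := by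
    intro x y hxy k hk
    have := hxy k fun i hi => by have := hk i hi; simp only at this; omega
    simp only
    omega
  have := h.dual.sh_psi_lt (c := fun i => 1 - c i) (b := fun i => 1 - b i)
    (fun i => by rcases hc i with hi | hi <;> simp [hi]) (by simp [hb0]) (by simp [hb1])
    (fun k => hflip (hle k)) n
  rw [psi_dual hc, psi_dual hb, sh_neg] at this
  refine this.imp (fun ⟨k, hk, heq⟩ => ⟨k, hk, ?_⟩) LexLT.of_neg
  funext i
  have := congrFun heq i
  simp only [sh] at this ⊢
  omega

/-- Composition of extremal pairs, in terms of the state sequences of the second pair. -/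
lemma comp (h : Good m s l) {q : ℕ} {cs cl : ℕ → ℤ} (hr : Good q (sh 1 cs) (sh 1 cl))
    (hcs : Binary cs) (hcl : Binary cl) (ps : ∀ i, cs (i + q) = cs i) (pl : ∀ i, cl (i + q) = cl i)
    (s0 : cs 0 = 1) (s1 : cs 1 = 0) (l0 : cl 0 = 0) (l1 : cl 1 = 1) :
    Good (m * q) (psi m s l cs) (psi m s l cl) := by
  have per : ∀ c : ℕ → ℤ, (∀ i, c (i + q) = c i) →
      ∀ i, psi m s l c (i + m * q) = psi m s l c i := by
    intro c hc i
    have h1 : sh q c = c := by funext i; simp only [sh]; rw [add_comm, hc]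
    have h2 := congrFun (h.sh_psi q c) i
    rw [h1] at h2
    rw [← h2]
    simp only [sh]
    congr 1
    ring
  have le_l : ∀ c, Binary c → (∀ k, LexLE (sh (k + 1) c) (sh 1 cl)) →
      ∀ j, LexLE (sh j (psi m s l c)) (psi m s l cl) := by
    intro c hc hle j
    rcases h.sh_psi_lt hc l0 l1 hle j with ⟨k, rfl, hk⟩ | hlt
    · rw [h.sh_psi, hk]; exact LexLE.refl _
    · exact hlt.le
  have s_le : ∀ c, Binary c → (∀ k, LexLE (sh 1 cs) (sh (k + 1) c)) →
      ∀ j, LexLE (psi m s l cs) (sh j (psi m s l c)) := by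
    intro c hc hle j
    rcases h.psi_lt_sh hc hcs s0 s1 hle j with ⟨k, rfl, hk⟩ | hlt
    · rw [h.sh_psi, hk]; exact LexLE.refl _
    · exact hlt.le
  have prim : ∀ {c : ℕ → ℤ}, (∀ k, sh k (sh 1 c) = sh 1 c → q ∣ k) → ∀ {j : ℕ},
      ((∃ k, j = k * m ∧ sh k c = c)) → m * q ∣ j := by
    rintro c hp j ⟨k, rfl, hk⟩
    rw [mul_comm]
    refine mul_dvd_mul_right (hp k ?_) m
    rw [sh_sh, add_comm, ← sh_sh, hk]
  have hss : ∀ k, LexLE (sh 1 cs) (sh (k + 1) cs) := fun k => by rw [← sh_sh]; exact hr.ss k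
  have hll : ∀ k, LexLE (sh (k + 1) cl) (sh 1 cl) := fun k => by rw [← sh_sh]; exact hr.ll k
  exact
    { pos := Nat.mul_pos h.pos hr.pos
      per_s := per cs ps
      per_l := per cl pl
      ss := s_le cs hcs hss
      sl := le_l cs hcs fun k => by rw [← sh_sh]; exact hr.sl k
      ls := s_le cl hcl fun k => by rw [← sh_sh]; exact hr.ls k
      ll := le_l cl hcl hll
      prim_s := fun j hj => prim hr.prim_s <| (h.psi_lt_sh hcs hcs s0 s1 hss j).resolve_right
        fun hlt => (hj ▸ hlt).irrefl
      prim_l := fun j hj => prim hr.prim_l <| (h.sh_psi_lt hcl l0 l1 hll j).resolve_right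
        fun hlt => (hj ▸ hlt).irrefl }

end Good

/-- A good pair coming from a word with nonnegative letters and positive last letter. -/
structure Adm (m : ℕ) (s l : ℕ → ℤ) : Prop extends Good m s l where
  nonneg : ∀ i, 0 ≤ s i
  last : 1 ≤ s (m - 1)
  rot : ∃ t, l = sh t s

namespace Adm

variable {m : ℕ} {s l : ℕ → ℤ}

lemma l_nonneg (h : Adm m s l) (i : ℕ) : 0 ≤ l i := by
  obtain ⟨t, rfl⟩ := h.rot
  exact h.nonneg _

lemma le_l_zero (h : Adm m s l) (i : ℕ) : s i ≤ l 0 := h.sl i 0 (by simp)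

lemma psi_nonneg (h : Adm m s l) {c : ℕ → ℤ} (hc : Binary c) (i : ℕ) :
    0 ≤ psi m s l c i := by
  have hl := h.l_nonneg i
  have hs := h.nonneg i
  simp only [psi]
  rcases hc (i / m) with h0 | h0
  · rw [if_pos h0]
    rcases hc ((i + 1) / m) with h1 | h1 <;> omega
  · rw [if_neg (by omega)]
    by_cases hd : m ∣ i + 1
    · have h1 : i % m = m - 1 := by
        have h2 := Nat.mod_lt i h.pos
        have h3 : m ∣ i % m + 1 := by
          have := Nat.div_add_mod i m
          rw [← this, add_assoc] at hd
          exact (Nat.dvd_add_right (Dvd.intro _ rfl)).1 hd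
        have := Nat.le_of_dvd (by omega) h3
        omega
      have := h.last
      rw [← h1, mod_of_periodic h.per_s] at this
      rcases hc ((i + 1) / m) with h1 | h1 <;> omega
    · rw [Nat.succ_div_of_not_dvd hd]
      omega

lemma psi_nice (h : Adm m s l) {c : ℕ → ℤ} (hc : Binary c) (hc0 : c 0 = 0) :
    Nice (psi m s l c) where
  nonneg := h.psi_nonneg hc
  bdd := by
    refine ⟨l 0 + 1, fun i => ?_⟩
    have h1 := h.le_l_zero i
    have h2 : l i ≤ l 0 := h.ll i 0 (by simp)
    simp only [psi]
    rcases hc (i / m) with h0 | h0 <;> rcases hc ((i + 1) / m) with h3 | h3 <;>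
      split_ifs <;> omega
  pos := by
    have := h.le_l_zero (m - 1)
    have := h.last
    simp only [psi, Nat.zero_div, hc0, if_true]
    rcases hc ((0 + 1) / m) with h3 | h3 <;> omega
  tail n := by
    have hm := h.pos
    have hl0 : 1 ≤ l 0 := h.last.trans (h.le_l_zero _)
    have hzero : ∀ k, c k = 0 → 0 < psi m s l c (k * m) := by
      intro k hk
      have hl : l (k * m) = l 0 := by simpa using add_mul_of_periodic h.per_l k 0
      simp only [psi, Nat.mul_div_cancel _ hm, hk, if_true, hl]
      rcases hc ((k * m + 1) / m) with h3 | h3 <;> omega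
    suffices ∃ i ≥ n, 0 < psi m s l c i by
      obtain ⟨i, hi, hpos⟩ := this
      exact ⟨i - n, by rwa [Nat.add_sub_of_le hi]⟩
    have hnm : n ≤ n * m := Nat.le_mul_of_pos_right n hm
    rcases hc n with h0 | h0
    · exact ⟨n * m, hnm, hzero n h0⟩
    rcases hc (n + 1) with h1 | h1
    · exact ⟨(n + 1) * m, by rw [add_mul]; omega, hzero _ h1⟩
    · refine ⟨n * m + (m - 1), by omega, ?_⟩
      have h2 : (n * m + (m - 1)) / m = n := by
        rw [add_comm, Nat.add_mul_div_right _ _ hm, Nat.div_eq_of_lt (by omega), zero_add]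
      have h3 : (n * m + (m - 1) + 1) / m = n + 1 := by
        rw [show n * m + (m - 1) + 1 = (n + 1) * m by rw [add_mul]; omega, Nat.mul_div_cancel _ hm]
      have := h.last
      simp only [psi, h2, h3, h0, h1, add_mul_of_periodic h.per_s]
      norm_num
      omega

lemma baseOf_psi_lt (h : Adm m s l) {c b : ℕ → ℤ} (hc : Binary c) (hb : Binary b)
    (hc0 : c 0 = 0) (hb0 : b 0 = 0) (hb1 : b 1 = 1)
    (hle : ∀ k, LexLE (sh (k + 1) c) (sh 1 b)) (hne : c ≠ b) :
    baseOf (psi m s l c) < baseOf (psi m s l b) := by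
  refine (h.psi_nice hc hc0).baseOf_lt (h.psi_nice hb hb0) (fun n => ?_) ?_
  · rcases h.sh_psi_lt hc hb0 hb1 hle n with ⟨k, rfl, hk⟩ | hlt
    · rw [h.sh_psi, hk]; exact LexLE.refl _
    · exact hlt.le
  · rcases h.sh_psi_lt hc hb0 hb1 hle 0 with ⟨k, hk, hcb⟩ | hlt
    · have hk0 : k = 0 := by
        rcases Nat.mul_eq_zero.1 hk.symm with hk | hk
        · exact hk
        · exact absurd hk h.pos.ne'
      rw [hk0, sh_zero] at hcb
      exact absurd hcb hne
    · rwa [sh_zero] at hlt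

lemma comp (h : Adm m s l) {q : ℕ} {cs cl : ℕ → ℤ} (hr : Good q (sh 1 cs) (sh 1 cl))
    (hcs : Binary cs) (hcl : Binary cl) (ps : ∀ i, cs (i + q) = cs i) (pl : ∀ i, cl (i + q) = cl i)
    (s0 : cs 0 = 1) (s1 : cs 1 = 0) (l0 : cl 0 = 0) (l1 : cl 1 = 1) (hrot : ∃ t, cl = sh t cs) :
    Adm (m * q) (psi m s l cs) (psi m s l cl) where
  toGood := h.toGood.comp hr hcs hcl ps pl s0 s1 l0 l1
  nonneg := h.psi_nonneg hcs
  last := by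
    have hm := h.pos
    have hmq : m * q - 1 + 1 = m * q := Nat.sub_add_cancel (Nat.mul_pos hm hr.pos)
    have hq : cs q = 1 := by rw [← zero_add q, ps, s0]
    have hs : s (m * q - 1) = s (m - 1) := by
      rw [← add_mul_of_periodic h.per_s (q - 1) (m - 1)]
      congr 1
      obtain ⟨q, rfl⟩ := Nat.exists_eq_succ_of_ne_zero hr.pos.ne'
      simp only [Nat.succ_eq_add_one, Nat.add_sub_cancel, mul_add, mul_one, mul_comm q m]
      omega
    have hlast := h.last
    have hl := h.l_nonneg (m * q - 1)
    simp only [psi, hmq, Nat.mul_div_cancel_left q hm, hq, hs]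
    rcases hcs ((m * q - 1) / m) with h0 | h0
    · rw [if_pos h0]; omega
    · rw [if_neg (by omega)]; omega
  rot := by
    obtain ⟨t, rfl⟩ := hrot
    exact ⟨t * m, (h.sh_psi t cs).symm⟩

end Adm

/-! ### Mechanical sequences -/

/-- Lower mechanical sequence of slope `p / q`. -/
def mechS (p q : ℤ) : ℕ → ℤ := fun i => ((i : ℤ) + 1) * p / q - (i : ℤ) * p / q

/-- Upper mechanical sequence of slope `p / q`. -/
def mechL (p q : ℤ) : ℕ → ℤ := -mechS (-p) q

/-- The state sequence of `mechS`: it is preceded by its last periodic digit. -/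
def stS (p q : ℤ) : ℕ → ℤ := fun i => (i : ℤ) * p / q - ((i : ℤ) - 1) * p / q

/-- The state sequence of `mechL`. -/
def stL (p q : ℤ) : ℕ → ℤ := -stS (-p) q

/-- The lower mechanical sequence with its first digit incremented. -/
def upS (p q : ℤ) : ℕ → ℤ := fun i => mechS p q i + if i = 0 then 1 else 0

/-- The state sequence of `upS`. -/
def stU (p q : ℤ) : ℕ → ℤ := fun i => if i = 0 then 0 else upS p q (i - 1)

/-- The state sequence `0 1 1 1 …`. -/
def step01 : ℕ → ℤ := fun i => if i = 0 then 0 else 1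

lemma sh_stS (p q : ℤ) : sh 1 (stS p q) = mechS p q := by
  funext i
  simp only [sh, stS, mechS]
  push_cast
  ring_nf

lemma sh_stL (p q : ℤ) : sh 1 (stL p q) = mechL p q := by
  rw [stL, sh_neg, sh_stS]; rfl

lemma sh_stU (p q : ℤ) : sh 1 (stU p q) = upS p q := by
  funext i
  simp [sh, stU]

lemma ediv_eq_of_bounds {a q z : ℤ} (h1 : z * q ≤ a) (h2 : a < z * q + q) : a / q = z := by
  have hq : 0 < q := by linarith
  refine le_antisymm ?_ ((Int.le_ediv_iff_mul_le hq).2 h1)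
  exact Int.lt_add_one_iff.1 ((Int.ediv_lt_iff_lt_mul hq).2 (by linarith))

lemma ediv_add_ediv_le {q : ℤ} (hq : 0 < q) (a b : ℤ) : a / q + b / q ≤ (a + b) / q := by
  rw [Int.le_ediv_iff_mul_le hq, add_mul]
  exact add_le_add (Int.ediv_mul_le _ hq.ne') (Int.ediv_mul_le _ hq.ne')

lemma neg_neg_ediv {a q : ℤ} (hq : 0 < q) (h : ¬q ∣ a) : -(-a / q) = a / q + 1 := by
  have h1 := Int.ediv_mul_le a hq.ne'
  have h2 := Int.lt_ediv_add_one_mul_self a hq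
  have h3 : a / q * q ≠ a := fun hc => h ⟨a / q, by rw [mul_comm]; exact hc.symm⟩
  have h4 : a / q * q < a := lt_of_le_of_ne h1 h3
  rw [ediv_eq_of_bounds (a := -a) (q := q) (z := -(a / q + 1)) (by linarith) (by linarith), neg_neg]

lemma sum_sh_mechS (p q : ℤ) (j n : ℕ) :
    ∑ i ∈ Finset.range n, sh j (mechS p q) i = ((j : ℤ) + n) * p / q - (j : ℤ) * p / q := by
  induction n with
  | zero => simp
  | succ n ih =>
    rw [Finset.sum_range_succ, ih]
    simp only [sh, mechS]
    push_cast
    rw [add_assoc (j : ℤ)]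
    ring

lemma sum_mechS (p q : ℤ) (n : ℕ) :
    ∑ i ∈ Finset.range n, mechS p q i = (n : ℤ) * p / q := by
  simpa [sh_zero] using sum_sh_mechS p q 0 n

lemma sum_mechL (p q : ℤ) (n : ℕ) :
    ∑ i ∈ Finset.range n, mechL p q i = -(-((n : ℤ) * p) / q) := by
  simp only [mechL, Pi.neg_apply, Finset.sum_neg_distrib, sum_mechS, mul_neg]

lemma sum_upS (p q : ℤ) (n : ℕ) :
    ∑ i ∈ Finset.range n, upS p q i = (n : ℤ) * p / q + if n = 0 then 0 else 1 := by
  simp only [upS, Finset.sum_add_distrib, sum_mechS]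
  cases n <;> simp [Finset.sum_ite_eq']

lemma mechS_le_sh {q : ℤ} (hq : 0 < q) (p : ℤ) (j : ℕ) : LexLE (mechS p q) (sh j (mechS p q)) := by
  refine LexLE.of_sum_le fun n => ?_
  rw [sum_mechS, sum_sh_mechS, add_mul]
  linarith [ediv_add_ediv_le hq (j * p) (n * p)]

lemma sh_mechS_le_mechL {q : ℤ} (hq : 0 < q) (p : ℤ) (j : ℕ) :
    LexLE (sh j (mechS p q)) (mechL p q) := by
  refine LexLE.of_sum_le fun n => ?_
  rw [sum_mechL, sum_sh_mechS, add_mul]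
  have := ediv_add_ediv_le hq (j * p + n * p) (-(n * p))
  rw [add_neg_cancel_right] at this
  linarith

lemma mechS_periodic {q : ℕ} (hq : 0 < q) (p : ℤ) (i : ℕ) : mechS p q (i + q) = mechS p q i := by
  have hq' : (q : ℤ) ≠ 0 := by exact_mod_cast hq.ne'
  simp only [mechS]
  push_cast
  rw [show ((i : ℤ) + q + 1) * p = (i + 1) * p + p * q by ring,
    show ((i : ℤ) + q) * p = i * p + p * q by ring,
    Int.add_mul_ediv_right _ _ hq', Int.add_mul_ediv_right _ _ hq']
  ring

lemma stS_periodic {q : ℕ} (hq : 0 < q) (p : ℤ) (i : ℕ) : stS p q (i + q) = stS p q i := by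
  have hq' : (q : ℤ) ≠ 0 := by exact_mod_cast hq.ne'
  simp only [stS]
  push_cast
  rw [show ((i : ℤ) + q - 1) * p = (i - 1) * p + p * q by ring,
    show ((i : ℤ) + q) * p = i * p + p * q by ring,
    Int.add_mul_ediv_right _ _ hq', Int.add_mul_ediv_right _ _ hq']
  ring

lemma stL_periodic {q : ℕ} (hq : 0 < q) (p : ℤ) (i : ℕ) : stL p q (i + q) = stL p q i := by
  simp only [stL, Pi.neg_apply, stS_periodic hq]

lemma dvd_of_sh_mechS {p : ℤ} {q : ℕ} (hq : 0 < q) (hpq : IsCoprime p (q : ℤ)) {j : ℕ}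
    (h : sh j (mechS p q) = mechS p q) : q ∣ j := by
  have hq' : (q : ℤ) ≠ 0 := by exact_mod_cast hq.ne'
  have hadd : ∀ n : ℕ, ((j : ℤ) + n) * p / q = j * p / q + n * p / q := fun n => by
    have := sum_sh_mechS p q j n
    rw [h, sum_mechS] at this
    linarith
  have hmul : ∀ k : ℕ, ((k : ℤ) * j) * p / q = k * (j * p / q) := fun k => by
    induction k with
    | zero => simp
    | succ k ih =>
      have := hadd (k * j)
      push_cast at this ⊢
      rw [show ((k : ℤ) + 1) * j = j + k * j by ring, this, ih]
      ring
  have h1 := hmul q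
  rw [mul_assoc, Int.mul_ediv_cancel_left _ hq'] at h1
  have h2 : (q : ℤ) ∣ j * p := ⟨_, h1⟩
  exact_mod_cast hpq.symm.dvd_of_dvd_mul_right h2

lemma mech_good {p : ℤ} {q : ℕ} (hq : 0 < q) (hpq : IsCoprime p (q : ℤ)) :
    Good q (mechS p q) (mechL p q) := by
  have hq' : (0 : ℤ) < q := by exact_mod_cast hq
  have hneg : mechS p q = -mechL (-p) q := by simp [mechL]
  exact
    { pos := hq
      per_s := mechS_periodic hq p
      per_l := fun i => by simp only [mechL, Pi.neg_apply, mechS_periodic hq]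
      ss := mechS_le_sh hq' p
      sl := sh_mechS_le_mechL hq' p
      ls := fun j => by
        rw [hneg]
        exact (sh_mechS_le_mechL hq' (-p) j).neg
      ll := fun j => (mechS_le_sh hq' (-p) j).neg
      prim_s := fun j hj => dvd_of_sh_mechS hq hpq hj
      prim_l := fun j hj => dvd_of_sh_mechS hq hpq.neg_left (neg_injective hj) }

lemma exists_stL_eq_sh {p : ℤ} {q : ℕ} (hq : 0 < q) (hpq : IsCoprime p (q : ℤ)) :
    ∃ t, stL p q = sh t (stS p q) := by
  have hq' : (0 : ℤ) < q := by exact_mod_cast hq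
  obtain ⟨a, b, hab⟩ := hpq
  have ht : 0 ≤ -a % (q : ℤ) := Int.emod_nonneg _ hq'.ne'
  obtain ⟨t, htn⟩ := Int.eq_ofNat_of_zero_le ht
  have hdm := Int.emod_add_mul_ediv (-a) q
  set k := -a / (q : ℤ)
  have htp : (t : ℤ) * p = (b - k * p) * q - 1 := by
    rw [← htn]
    linear_combination hdm * p - hab
  have key : ∀ i : ℤ, (i + t) * p / q = (b - k * p) - 1 - (i * -p) / q := fun i => by
    have h1 := Int.ediv_mul_le (i * -p) hq'.ne'
    have h2 := Int.lt_ediv_add_one_mul_self (i * -p) hq'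
    apply ediv_eq_of_bounds
    · rw [add_mul, htp]; linarith
    · rw [add_mul, htp]; linarith
  refine ⟨t, ?_⟩
  funext i
  simp only [stL, stS, sh, Pi.neg_apply]
  push_cast
  rw [add_comm (t : ℤ), key, show (i : ℤ) + t - 1 = (i - 1) + t by ring, key]
  ring

lemma exists_mechL_eq_sh {p : ℤ} {q : ℕ} (hq : 0 < q) (hpq : IsCoprime p (q : ℤ)) :
    ∃ t, mechL p q = sh t (mechS p q) := by
  obtain ⟨t, ht⟩ := exists_stL_eq_sh hq hpq
  exact ⟨t, by rw [← sh_stL, ht, sh_sh, ← sh_stS, sh_sh, add_comm]⟩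

lemma mech_adm {p : ℤ} {q : ℕ} (hq : 0 < q) (hp : 0 < p) (hpq : IsCoprime p (q : ℤ)) :
    Adm q (mechS p q) (mechL p q) where
  toGood := mech_good hq hpq
  nonneg i := by
    simp only [mechS]
    have : (i : ℤ) * p / q ≤ (i + 1) * p / q :=
      Int.ediv_le_ediv (by exact_mod_cast hq) (by linarith)
    linarith
  last := by
    have hq' : (0 : ℤ) < q := by exact_mod_cast hq
    have h1 : ((q - 1 : ℕ) : ℤ) = q - 1 := by omega
    simp only [mechS, h1, sub_add_cancel, Int.mul_ediv_cancel_left _ hq'.ne']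
    have : ((q : ℤ) - 1) * p / q < p := (Int.ediv_lt_iff_lt_mul hq').2 (by linarith)
    omega
  rot := exists_mechL_eq_sh hq hpq

lemma stS_binary {p : ℤ} {q : ℕ} (hq : 0 < q) (hp : 0 ≤ p) (hpq : p ≤ q) : Binary (stS p q) := by
  intro i
  have hq' : (0 : ℤ) < q := by exact_mod_cast hq
  have h1 : ((i : ℤ) - 1) * p / q ≤ i * p / q := Int.ediv_le_ediv hq' (by linarith)
  have h2 : (i : ℤ) * p / q < ((i : ℤ) - 1) * p / q + 2 := by
    rw [Int.ediv_lt_iff_lt_mul hq']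
    linarith [Int.lt_ediv_add_one_mul_self (((i : ℤ) - 1) * p) hq']
  simp only [stS]
  omega

lemma stL_binary {p : ℤ} {q : ℕ} (hq : 0 < q) (hp : 0 ≤ p) (hpq : p ≤ q)
    (hcop : IsCoprime p (q : ℤ)) : Binary (stL p q) := by
  obtain ⟨t, ht⟩ := exists_stL_eq_sh hq hcop
  rw [ht]
  exact (stS_binary hq hp hpq).sh t

lemma stS_zero {p q : ℤ} (hp : 0 < p) (hpq : p < q) : stS p q 0 = 1 := by
  have : -p / q = -1 := ediv_eq_of_bounds (by linarith) (by linarith)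
  simp [stS, this]

lemma stS_one {p q : ℤ} (hp : 0 < p) (hpq : p < q) : stS p q 1 = 0 := by
  simp [stS, Int.ediv_eq_zero_of_lt hp.le hpq]

lemma stL_zero {p q : ℤ} (hp : 0 < p) (hpq : p < q) : stL p q 0 = 0 := by
  simp [stL, stS, Int.ediv_eq_zero_of_lt hp.le hpq]

lemma stL_one {p q : ℤ} (hp : 0 < p) (hpq : p < q) : stL p q 1 = 1 := by
  have : -p / q = -1 := ediv_eq_of_bounds (by linarith) (by linarith)
  simp [stL, stS, this]

lemma stU_one {p q : ℤ} (hp : 0 < p) (hpq : p < q) : stU p q 1 = 1 := by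
  simp [stU, upS, mechS, Int.ediv_eq_zero_of_lt hp.le hpq]

lemma stU_of_two_le (p q : ℤ) {i : ℕ} (hi : 2 ≤ i) : stU p q i = stS p q i := by
  have h := congrFun (sh_stS p q) (i - 1)
  simp only [sh, show 1 + (i - 1) = i by omega] at h
  rw [h, stU, if_neg (by omega), upS, if_neg (by omega), add_zero]

lemma stU_binary {p : ℤ} {q : ℕ} (hp : 0 < p) (hpq : p < q) : Binary (stU p q) := by
  intro i
  match i with
  | 0 => exact Or.inl rfl
  | 1 => exact Or.inr (stU_one hp hpq)
  | i + 2 =>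
    rw [stU_of_two_le _ _ (by omega)]
    exact stS_binary (by omega) hp.le hpq.le _

lemma mechL_eq_upS {p : ℤ} {q : ℕ} (hpq : IsCoprime p (q : ℤ)) {i : ℕ}
    (hi : i + 1 < q) : mechL p q i = upS p q i := by
  have hq' : (0 : ℤ) < q := by omega
  have hnd : ∀ k : ℕ, 0 < k → k < q → ¬(q : ℤ) ∣ k * p := fun k hk hkq hd => by
    have := Int.natCast_dvd_natCast.1 (hpq.symm.dvd_of_dvd_mul_right hd)
    exact absurd (Nat.le_of_dvd hk this) (by omega)
  have h1 := neg_neg_ediv hq' (hnd (i + 1) (by omega) hi)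
  push_cast at h1
  rcases Nat.eq_zero_or_pos i with rfl | hi0
  · simp only [mechL, mechS, upS, Pi.neg_apply]
    simp at h1 ⊢
    exact h1
  · have h2 := neg_neg_ediv hq' (hnd i hi0 (by omega))
    simp only [mechL, mechS, upS, Pi.neg_apply, if_neg hi0.ne', mul_neg]
    linarith

lemma mechL_add_one_eq_upS {p : ℤ} {q : ℕ} (hpq : IsCoprime p (q : ℤ)) {i : ℕ}
    (hi : i + 1 = q) : mechL p q i + 1 = upS p q i := by
  have hq' : (0 : ℤ) < q := by omega
  have hiq : (i : ℤ) + 1 = q := by exact_mod_cast hi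
  simp only [mechL, mechS, upS, Pi.neg_apply, hiq, Int.mul_ediv_cancel_left _ hq'.ne', mul_neg]
  rw [← mul_neg, Int.mul_ediv_cancel_left _ hq'.ne']
  rcases Nat.eq_zero_or_pos i with rfl | hi0
  · simp
  · have hnd : ¬(q : ℤ) ∣ i * p := fun hd => by
      have := Int.natCast_dvd_natCast.1 (hpq.symm.dvd_of_dvd_mul_right hd)
      exact absurd (Nat.le_of_dvd hi0 this) (by omega)
    have h2 := neg_neg_ediv hq' hnd
    rw [if_neg hi0.ne']
    linarith

lemma psi_step01 {m : ℕ} {s l : ℕ → ℤ} (hm : 0 < m) (i : ℕ) :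
    psi m s l step01 i =
      if i + 1 < m then l i else if i + 1 = m then l i + 1 else s i := by
  have h0 : ∀ k, k / m = 0 ↔ k < m := fun k => by rw [Nat.div_eq_zero_iff]; omega
  rcases lt_trichotomy (i + 1) m with h | h | h
  · simp [psi, step01, h0, h, show i < m by omega]
  · simp [psi, step01, h0, show i < m by omega, h]
  · simp [psi, step01, h0, show ¬i < m by omega, show ¬i + 1 < m by omega, h.ne']

lemma psi_mech_step01 {p : ℤ} {q : ℕ} (hq : 0 < q) (hpq : IsCoprime p (q : ℤ)) :
    psi q (mechS p q) (mechL p q) step01 = upS p q := by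
  funext i
  rw [psi_step01 hq]
  split_ifs with h1 h2
  · exact mechL_eq_upS hpq h1
  · exact mechL_add_one_eq_upS hpq h2
  · rw [upS, if_neg (by omega), add_zero]

lemma psi_psi_step01 {m : ℕ} {s l : ℕ → ℤ} (hm : 0 < m) {p : ℤ} {q : ℕ} (hp : 0 < p)
    (hpq : p < q) (hcop : IsCoprime p (q : ℤ)) :
    psi (m * q) (psi m s l (stS p q)) (psi m s l (stL p q)) step01 = psi m s l (stU p q) := by
  have hlow : ∀ k < q, stL p q k = stU p q k := by
    intro k hk
    rcases Nat.eq_zero_or_pos k with rfl | hk0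
    · rw [stL_zero hp hpq]; rfl
    · obtain ⟨k, rfl⟩ := Nat.exists_eq_succ_of_ne_zero hk0.ne'
      have h := congrFun (sh_stL p q) k
      have h' := congrFun (sh_stU p q) k
      rw [mechL_eq_upS hcop hk] at h
      rw [Nat.succ_eq_add_one, add_comm]
      exact h.trans h'.symm
  have hmid : stL p q q + 1 = stU p q q := by
    obtain ⟨k, rfl⟩ : ∃ k, q = k + 1 := ⟨q - 1, by omega⟩
    have h := congrFun (sh_stL p ((k + 1 : ℕ) : ℤ)) k
    have h' := congrFun (sh_stU p ((k + 1 : ℕ) : ℤ)) k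
    rw [← mechL_add_one_eq_upS hcop rfl, ← h] at h'
    simp only [sh, add_comm 1 k] at h'
    exact h'.symm
  have hhigh : ∀ k, q ≤ k → stU p q k = stS p q k := fun k hk => stU_of_two_le _ _ (by omega)
  funext i
  rw [psi_step01 (Nat.mul_pos hm (by omega))]
  split_ifs with h1 h2
  · have h3 : (i + 1) / m < q := Nat.div_lt_of_lt_mul h1
    have h4 : i / m < q := Nat.div_lt_of_lt_mul (by omega)
    simp only [psi, hlow _ h3, hlow _ h4]
  · have h4 : i / m < q := Nat.div_lt_of_lt_mul (by omega)
    simp only [psi, hlow _ h4, h2, Nat.mul_div_cancel_left q hm, ← hmid]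
    ring
  · have h3 : q ≤ (i + 1) / m := (Nat.le_div_iff_mul_le hm).2 (by rw [mul_comm]; omega)
    have h4 : q ≤ i / m := (Nat.le_div_iff_mul_le hm).2 (by rw [mul_comm]; omega)
    simp only [psi, hhigh _ h3, hhigh _ h4]

lemma sum_upS_le_sum_mechL {p q p' q' : ℤ} (hq : 0 < q) (hq' : 0 < q') (h : p * q' < p' * q)
    (n : ℕ) : ∑ i ∈ Finset.range n, upS p q i ≤ ∑ i ∈ Finset.range n, mechL p' q' i := by
  rw [sum_upS, sum_mechL]
  rcases Nat.eq_zero_or_pos n with rfl | hn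
  · simp
  rw [if_neg hn.ne']
  have hn' : (0 : ℤ) < n := by exact_mod_cast hn
  set A := (n : ℤ) * p / q
  set B := -((n : ℤ) * p') / q'
  have hA : A * q ≤ n * p := Int.ediv_mul_le _ hq.ne'
  have hB : B * q' ≤ -(n * p') := Int.ediv_mul_le _ hq'.ne'
  have h1 : A * q * q' ≤ n * p * q' := by gcongr
  have h2 : B * q' * q ≤ -(n * p') * q := by gcongr
  have h3 : n * (p * q') < n * (p' * q) := by gcongr
  have h4 : (A + B) * (q * q') < 0 := by linarith
  have h5 : A + B < 0 := by
    by_contra! hc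
    exact absurd h4 (not_lt.2 (by positivity))
  omega

lemma sh_upS_le_mechL {p q p' q' : ℤ} (hq : 0 < q) (hq' : 0 < q') (h : p * q' < p' * q) (k : ℕ) :
    LexLE (sh k (upS p q)) (mechL p' q') := by
  refine LexLE.of_sum_le fun n => ?_
  refine le_trans ?_ (sum_upS_le_sum_mechL hq hq' h n)
  rcases Nat.eq_zero_or_pos k with rfl | hk
  · rw [sh_zero]
  rcases Nat.eq_zero_or_pos n with rfl | hn
  · simp
  have h1 : sh k (upS p q) = sh k (mechS p q) := by
    funext i
    simp only [sh, upS, if_neg (show k + i ≠ 0 by omega), add_zero]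
  rw [h1, sum_sh_mechS, sum_upS, if_neg hn.ne']
  have h2 := Int.ediv_mul_le (((k : ℤ) + n) * p) hq.ne'
  have h3 := Int.lt_ediv_add_one_mul_self ((k : ℤ) * p) hq
  have h4 := Int.lt_ediv_add_one_mul_self ((n : ℤ) * p) hq
  have h5 : ((k : ℤ) + n) * p / q < k * p / q + n * p / q + 2 := by
    by_contra! hc
    have : (k * p / q + n * p / q + 2) * q ≤ ((k : ℤ) + n) * p / q * q := by gcongr
    linarith
  omega

lemma upS_ne_mechL {p q p' q' : ℤ} (hq : 0 < q) (hq' : 0 < q') (h : p * q' < p' * q) :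
    upS p q ≠ mechL p' q' := by
  intro heq
  have h1 := sum_upS p q (2 * q * q').toNat
  have hpos : 0 < 2 * q * q' := by positivity
  rw [heq, sum_mechL, if_neg (by omega), Int.toNat_of_nonneg hpos.le,
    show -(2 * q * q' * p') = (-(2 * q * p')) * q' by ring, Int.mul_ediv_cancel _ hq'.ne',
    show 2 * q * q' * p = (2 * q' * p) * q by ring, Int.mul_ediv_cancel _ hq.ne'] at h1
  linarith

/-! ### Words representing sequences -/

/-- The word `w` has length `m` and its letters are the first `m` terms of `x`. -/
def Rep (w : List ℕ) (m : ℕ) (x : ℕ → ℤ) : Prop :=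
  w.length = m ∧ ∀ i < m, ((w.getD i 0 : ℕ) : ℤ) = x i

lemma Rep.getElem {w : List ℕ} {m : ℕ} {x : ℕ → ℤ} (h : Rep w m x) {i : ℕ} (hi : i < w.length) :
    (w[i] : ℤ) = x i := by
  rw [← h.2 i (h.1 ▸ hi), List.getD_eq_getElem]

lemma Rep.le {u v : List ℕ} {m : ℕ} {x y : ℕ → ℤ} (hu : Rep u m x) (hv : Rep v m y)
    (h : LexLE x y) : u ≤ v := by
  rw [← not_lt, List.lt_iff_exists]
  rintro (⟨-, hlen⟩ | ⟨i, h1, h2, heq, hlt⟩)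
  · rw [hu.1, hv.1] at hlen
    exact lt_irrefl _ hlen
  · have := h i fun j hj => by
      rw [← hu.getElem (hj.trans h2), ← hv.getElem (hj.trans h1), heq j hj]
    rw [← hu.getElem h2, ← hv.getElem h1] at this
    omega

lemma Rep.rotate {w : List ℕ} {m : ℕ} {x : ℕ → ℤ} (h : Rep w m x) (hx : ∀ i, x (i + m) = x i)
    (n : ℕ) : Rep (w.rotate n) m (sh n x) := by
  refine ⟨by rw [List.length_rotate, h.1], fun i hi => ?_⟩
  have hi' : i < (w.rotate n).length := by rw [List.length_rotate, h.1]; exact hi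
  rw [List.getD_eq_getElem _ _ hi', List.getElem_rotate, h.getElem, h.1, mod_of_periodic hx]
  simp only [sh, add_comm]

lemma Rep.perSeq {w : List ℕ} {m : ℕ} {x : ℕ → ℤ} (h : Rep w m x) (hm : 0 < m)
    (hx : ∀ i, x (i + m) = x i) : (fun i => ((perSeq w i : ℕ) : ℤ)) = x := by
  funext i
  rw [_root_.perSeq, h.1, h.2 _ (Nat.mod_lt _ hm), mod_of_periodic hx]

lemma Rep.of_last {w w' : List ℕ} {m : ℕ} {x : ℕ → ℤ} (h : Rep w m x) (hm : 0 < m) {a : ℕ} {e : ℤ}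
    (hw : w' = w.dropLast ++ [a]) (ha : (a : ℤ) = x (m - 1) + e) :
    Rep w' m fun i => x i + if i + 1 = m then e else 0 := by
  subst hw
  have hl := h.1
  refine ⟨by simp; omega, fun i hi => ?_⟩
  rw [List.getD_eq_getElem _ _ (by simp; omega)]
  by_cases hlast : i + 1 = m
  · rw [List.getElem_append_right (by simp; omega)]
    simp only [List.getElem_singleton, ha, hlast, if_true]
    rw [show m - 1 = i by omega]
  · rw [List.getElem_append_left (by simp; omega), List.getElem_dropLast, h.getElem]
    simp [hlast]

lemma Rep.getLast! {w : List ℕ} {m : ℕ} {x : ℕ → ℤ} (h : Rep w m x) (hm : 0 < m) :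
    (w.getLast! : ℤ) = x (m - 1) := by
  have hne : w ≠ [] := by
    rintro rfl
    simp [Rep] at h
    omega
  rw [List.getLast!_eq_getLast?_getD, List.getLast?_eq_some_getLast hne, Option.getD_some,
    List.getLast_eq_getElem, h.getElem, h.1]

lemma Rep.wplus {w : List ℕ} {m : ℕ} {x : ℕ → ℤ} (h : Rep w m x) (hm : 0 < m) :
    Rep (wplus w) m fun i => x i + if i + 1 = m then 1 else 0 :=
  h.of_last hm rfl (by push_cast; rw [h.getLast! hm])

lemma Rep.wminus {w : List ℕ} {m : ℕ} {x : ℕ → ℤ} (h : Rep w m x) (hm : 0 < m)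
    (hx : 1 ≤ x (m - 1)) : Rep (wminus w) m fun i => x i + if i + 1 = m then -1 else 0 :=
  h.of_last hm rfl (by have := h.getLast! hm; omega)

lemma Rep.congr {w : List ℕ} {m : ℕ} {x y : ℕ → ℤ} (h : Rep w m x) (hxy : ∀ i < m, x i = y i) :
    Rep w m y :=
  ⟨h.1, fun i hi => (h.2 i hi).trans (hxy i hi)⟩

lemma foldl_max_eq {M : List ℕ} : ∀ {xs : List (List ℕ)} {a : List ℕ}, (∀ x ∈ xs, x ≤ M) → a ≤ M →
    (a = M ∨ M ∈ xs) → xs.foldl max a = M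
  | [], a, _, _, h => by simpa using h
  | x :: xs, a, hle, ha, h => by
    have hx := hle x (by simp)
    refine foldl_max_eq (xs := xs) (a := max a x) (fun y hy => hle y (by simp [hy]))
      (max_le ha hx) ?_
    rcases h with rfl | h
    · exact Or.inl (max_eq_left hx)
    · rcases List.mem_cons.1 h with rfl | h
      · exact Or.inl (max_eq_right ha)
      · exact Or.inr h

section Word

variable {m : ℕ} {s l : ℕ → ℤ} {S : List ℕ}

lemma rep_maxCyc (h : Adm m s l) (hS : Rep S m s) : Rep (maxCyc S) m l := by
  obtain ⟨t, rfl⟩ := h.rot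
  have hr := hS.rotate h.per_s
  suffices maxCyc S = S.rotate t by rw [this]; exact hr t
  refine foldl_max_eq (fun x hx => ?_) (not_lt.1 (List.not_lt_nil _)) (Or.inr ?_)
  · obtain ⟨j, -, rfl⟩ := List.mem_map.1 hx
    exact (hr j).le (hr t) (h.sl j)
  · refine List.mem_map.2 ⟨t % S.length, List.mem_range.2 (Nat.mod_lt _ ?_), List.rotate_mod _ _⟩
    rw [hS.1]
    exact h.pos

lemma rep_phiBlock (h : Adm m s l) (hS : Rep S m s) {p d : ℕ} (hp : p ≤ 1) (hd : d ≤ 1) :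
    Rep (phiBlock S p d) m fun i =>
      (if (p : ℤ) = 0 then l i else s i) + if i + 1 = m then (d : ℤ) - p else 0 := by
  have hL := rep_maxCyc h hS
  interval_cases p <;> interval_cases d <;> simp only [phiBlock]
  · exact hL.congr fun i _ => by simp
  · exact (hL.wplus h.pos).congr fun i _ => by simp
  · exact (hS.wminus h.pos h.last).congr fun i _ => by simp
  · exact hS.congr fun i _ => by simp

lemma psi_first_block (hm : 0 < m) (c : ℕ → ℤ) {i : ℕ} (hi : i < m) :
    psi m s l c i = (if c 0 = 0 then l i else s i) + if i + 1 = m then c 1 - c 0 else 0 := by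
  simp only [psi, Nat.div_eq_of_lt hi]
  by_cases h : i + 1 = m
  · simp only [h, Nat.div_self hm, if_true]
  · rw [Nat.div_eq_of_lt (by omega), if_neg h, sub_self]

lemma psi_add (h : Good m s l) (c : ℕ → ℤ) {i : ℕ} (hi : m ≤ i) :
    psi m s l c i = psi m s l (sh 1 c) (i - m) := by
  rw [← h.sh_psi]
  simp only [sh, one_mul, Nat.add_sub_of_le hi]

lemma rep_phiAux (h : Adm m s l) (hS : Rep S m s) : ∀ (r : List ℕ) (p : ℕ) (c : ℕ → ℤ), p ≤ 1 →
    (∀ d ∈ r, d ≤ 1) → (∀ k ≤ r.length, (((p :: r).getD k 0 : ℕ) : ℤ) = c k) →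
    Rep (phiAux S p r) (r.length * m) (psi m s l c)
  | [], p, c, _, _, _ => ⟨by simp [phiAux], by simp⟩
  | d :: r, p, c, hp, hr, hc => by
    have hd : d ≤ 1 := hr d (by simp)
    have ih := rep_phiAux h hS r d (sh 1 c) hd (fun e he => hr e (by simp [he])) fun k hk => by
      rw [sh, add_comm, ← hc (k + 1) (by simpa using hk)]
      simp
    have hb := rep_phiBlock h hS hp hd
    have h0 : (p : ℤ) = c 0 := by simpa using hc 0 (by simp)
    have h1 : (d : ℤ) = c 1 := by simpa using hc 1 (by simp)
    rw [h0, h1] at hb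
    refine ⟨by simp [phiAux, hb.1, ih.1]; ring, fun i hi => ?_⟩
    rw [phiAux]
    rcases lt_or_ge i m with him | him
    · rw [List.getD_append _ _ _ _ (by rw [hb.1]; exact him), hb.2 i him,
        psi_first_block h.pos c him]
    · have hi' : i - m < r.length * m := by
        simp only [List.length_cons, add_mul, one_mul] at hi
        omega
      rw [List.getD_append_right _ _ _ _ (by rw [hb.1]; exact him), hb.1, ih.2 _ hi',
        psi_add h.toGood c him]

lemma wordSeq_eq_psi (h : Good m s l) {w : List ℕ} {x : ℕ → ℕ} (c : ℕ → ℤ)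
    (hw : Rep w m fun i => (if c 0 = 0 then l i else s i) + if i + 1 = m then c 1 - c 0 else 0)
    (hx : (fun i => (x i : ℤ)) = psi m s l (sh 1 c)) :
    (fun i => (wordSeq w x i : ℤ)) = psi m s l c := by
  funext i
  rw [wordSeq, hw.1]
  split_ifs with hi
  · rw [hw.2 i hi, psi_first_block h.pos c hi]
  · rw [psi_add h c (by omega), ← hx]

lemma psi_zero : psi m s l (fun _ => 0) = l := by
  funext i; simp [psi]

lemma psi_one : psi m s l (fun _ => 1) = s := by
  funext i; simp [psi]

/-- The state sequence `0 1 0 0 …`. -/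
def pulse : ℕ → ℤ := fun i => if i = 1 then 1 else 0

lemma valSeq_eq (β : ℝ) (x : ℕ → ℕ) : valSeq β x = valZ β fun i => (x i : ℤ) := by
  simp [valSeq, valZ]

lemma betaL_eq (h : Adm m s l) (hS : Rep S m s) : betaL S = baseOf (psi m s l fun _ => 0) := by
  have hx := (rep_maxCyc h hS).perSeq h.pos h.per_l
  simp only [betaL, valSeq_eq, hx, psi_zero]
  rfl

lemma betaR_eq (h : Adm m s l) (hS : Rep S m s) : betaR S = baseOf (psi m s l step01) := by
  have hx := wordSeq_eq_psi (w := wplus (maxCyc S)) (x := perSeq S) h.toGood step01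
    (((rep_maxCyc h hS).wplus h.pos).congr fun i _ => by simp [step01])
    (by
      have h1 : sh 1 step01 = fun _ => 1 := by funext i; simp [sh, step01]
      rw [hS.perSeq h.pos h.per_s, h1, psi_one])
  simp only [betaR, valSeq_eq, hx]
  rfl

lemma wordSeq_append (u v : List ℕ) (x : ℕ → ℕ) :
    wordSeq (u ++ v) x = wordSeq u (wordSeq v x) := by
  funext i
  simp only [wordSeq, List.length_append]
  split_ifs with h1 h2 h3 h4 <;> try omega
  · rw [List.getD_append _ _ _ _ h2]
  · rw [List.getD_append_right _ _ _ _ (by omega)]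
  · congr 1; omega

lemma betaStar_eq (h : Adm m s l) (hS : Rep S m s) : betaStar S = baseOf (psi m s l pulse) := by
  have hL := rep_maxCyc h hS
  have hx := wordSeq_eq_psi (w := wminus S) (x := perSeq (maxCyc S)) h.toGood (sh 1 pulse)
    ((hS.wminus h.pos h.last).congr fun i _ => by simp [sh, pulse])
    (by
      have h0 : sh 1 (sh 1 pulse) = fun _ => 0 := by
        funext i
        simp only [sh, pulse]
        rw [if_neg (by omega)]
      rw [hL.perSeq h.pos h.per_l, h0, psi_zero])
  have hy := wordSeq_eq_psi (w := wplus (maxCyc S)) h.toGood pulse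
    ((hL.wplus h.pos).congr fun i _ => by simp [pulse]) hx
  simp only [betaStar, valSeq_eq, wordSeq_append, hy]
  rfl

end Word

/-! ### Farey words are mechanical -/

/-- The Christoffel word of slope `p / q`. -/
def mechWord (p q : ℕ) : List ℕ := (List.range q).map fun i => (i + 1) * p / q - i * p / q

lemma rep_mechWord (p q : ℕ) : Rep (mechWord p q) q (mechS p q) := by
  refine ⟨by simp [mechWord], fun i hi => ?_⟩
  rw [List.getD_eq_getElem _ _ (by simpa [mechWord] using hi)]
  have hle : i * p / q ≤ (i + 1) * p / q := Nat.div_le_div_right (by gcongr; omega)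
  simp only [mechWord, List.getElem_map, List.getElem_range, mechS]
  push_cast [hle]
  rfl

lemma div_eq_of_bounds {a q z : ℕ} (h1 : z * q ≤ a) (h2 : a < z * q + q) : a / q = z :=
  Nat.div_eq_of_lt_le h1 (by rwa [Nat.succ_mul])

lemma mechWord_append {p q p' q' : ℕ} (hq : 0 < q) (hq' : 0 < q') (hdet : p' * q = p * q' + 1) :
    mechWord p q ++ mechWord p' q' = mechWord (p + p') (q + q') := by
  have hleft : ∀ i ≤ q, i * (p + p') / (q + q') = i * p / q := by
    intro i hi
    have h1 := Nat.div_mul_le_self (i * p) q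
    have h2 := Nat.lt_div_mul_add (a := i * p) hq
    set z := i * p / q
    apply div_eq_of_bounds
    · refine Nat.le_of_mul_le_mul_right (c := q) ?_ hq
      have h3 : z * q * (q + q') ≤ i * p * (q + q') := by gcongr
      have h4 : i * (p' * q) = i * (p * q' + 1) := by rw [hdet]
      nlinarith
    · refine Nat.lt_of_mul_lt_mul_right (a := q) ?_
      have h3 : (i * p + 1) * (q + q') ≤ (z * q + q) * (q + q') :=
        Nat.mul_le_mul_right _ (by omega)
      have h4 : i * (p' * q) = i * (p * q' + 1) := by rw [hdet]
      nlinarith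
  have hright : ∀ j ≤ q', (q + j) * (p + p') / (q + q') = p + j * p' / q' := by
    intro j hj
    have h1 := Nat.div_mul_le_self (j * p') q'
    have h2 := Nat.lt_div_mul_add (a := j * p') hq'
    set z := j * p' / q'
    obtain ⟨d, hd⟩ := Nat.exists_eq_add_of_le hj
    have h4 : j * (p' * q) = j * (p * q' + 1) := by rw [hdet]
    have h5 : q' * (p' * q) = q' * (p * q' + 1) := by rw [hdet]
    apply div_eq_of_bounds
    · refine Nat.le_of_mul_le_mul_right (c := q') ?_ hq'
      have h3 : z * q' * (q + q') ≤ j * p' * (q + q') := by gcongr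
      nlinarith
    · refine Nat.lt_of_mul_lt_mul_right (a := q') ?_
      have h3 : (j * p' + 1) * (q + q') ≤ (z * q' + q') * (q + q') :=
        Nat.mul_le_mul_right _ (by omega)
      nlinarith
  refine List.ext_getElem (by simp [mechWord]) fun i h1 h2 => ?_
  have hi : i < q + q' := by simpa [mechWord] using h2
  rw [List.getElem_append]
  simp only [mechWord, List.length_map, List.length_range, List.getElem_map, List.getElem_range]
  split_ifs with hiq
  · rw [hleft _ hiq, hleft _ hiq.le]
  · obtain ⟨j, rfl⟩ := Nat.exists_eq_add_of_le (not_lt.1 hiq)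
    rw [add_assoc, hright _ (by omega), hright _ (by omega), Nat.add_sub_cancel_left]
    omega

/-- `w` and `v` are Christoffel words of consecutive Farey fractions. -/
def FareyNeighbours (w v : List ℕ) : Prop :=
  ∃ p q p' q' : ℕ, w = mechWord p q ∧ v = mechWord p' q' ∧ 0 < q ∧ 0 < q' ∧ p ≤ q ∧ p' ≤ q' ∧
    p' * q = p * q' + 1

/-- `w` is the Christoffel word of a reduced fraction in `[0, 1]`. -/
def IsMech (w : List ℕ) : Prop := ∃ p q : ℕ, w = mechWord p q ∧ 0 < q ∧ p ≤ q ∧ p.Coprime q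

lemma FareyNeighbours.left {w v : List ℕ} (h : FareyNeighbours w v) :
    FareyNeighbours w (w ++ v) := by
  obtain ⟨p, q, p', q', rfl, rfl, hq, hq', hp, hp', hdet⟩ := h
  exact ⟨p, q, p + p', q + q', rfl, mechWord_append hq hq' hdet, hq, by omega, hp, by omega,
    by linarith⟩

lemma FareyNeighbours.right {w v : List ℕ} (h : FareyNeighbours w v) :
    FareyNeighbours (w ++ v) v := by
  obtain ⟨p, q, p', q', rfl, rfl, hq, hq', hp, hp', hdet⟩ := h
  exact ⟨p + p', q + q', p', q', mechWord_append hq hq' hdet, rfl, by omega, hq', by omega, hp',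
    by linarith⟩

lemma FareyNeighbours.isMech {w v : List ℕ} (h : FareyNeighbours w v) : IsMech w := by
  obtain ⟨p, q, p', q', rfl, rfl, hq, hq', hp, hp', hdet⟩ := h
  refine ⟨p, q, rfl, hq, hp, ?_⟩
  have h1 : p.gcd q ∣ p * q' := (Nat.gcd_dvd_left p q).mul_right _
  have h2 : p.gcd q ∣ p * q' + 1 := hdet ▸ (Nat.gcd_dvd_right p q).mul_left _
  exact Nat.dvd_one.1 ((Nat.dvd_add_right h1).1 h2)

lemma isChain_fareyInsert : ∀ {L : List (List ℕ)}, L.IsChain FareyNeighbours →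
    (fareyInsert L).IsChain FareyNeighbours
  | [], _ => by simp [fareyInsert]
  | [w], _ => by simp [fareyInsert]
  | [w, v], h => by
    have hwv := (List.isChain_cons_cons.1 h).1
    simp [fareyInsert, hwv.left, hwv.right]
  | w :: v :: u :: rest, h => by
    obtain ⟨hwv, hrest⟩ := List.isChain_cons_cons.1 h
    have ih := isChain_fareyInsert hrest
    simp only [fareyInsert] at ih ⊢
    exact List.isChain_cons_cons.2 ⟨hwv.left, List.isChain_cons_cons.2 ⟨hwv.right, ih⟩⟩

lemma isMech_of_mem_fareyInsert : ∀ {L : List (List ℕ)}, L.IsChain FareyNeighbours →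
    (∀ w ∈ L, IsMech w) → ∀ w ∈ fareyInsert L, IsMech w
  | [], _, _ => by simp [fareyInsert]
  | [w], _, h => by simpa [fareyInsert] using h
  | w :: v :: rest, hc, h => by
    obtain ⟨hwv, hrest⟩ := List.isChain_cons_cons.1 hc
    have ih := isMech_of_mem_fareyInsert hrest fun u hu => h u (List.mem_cons_of_mem _ hu)
    intro u hu
    simp only [fareyInsert, List.mem_cons] at hu
    rcases hu with rfl | rfl | hu
    · exact h u (by simp)
    · exact hwv.right.isMech
    · exact ih u hu

lemma fareyLevel_spec (n : ℕ) :
    (fareyLevel n).IsChain FareyNeighbours ∧ ∀ w ∈ fareyLevel n, IsMech w := by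
  induction n with
  | zero =>
    have h0 : ([0] : List ℕ) = mechWord 0 1 := by decide
    have h1 : ([1] : List ℕ) = mechWord 1 1 := by decide
    refine ⟨?_, ?_⟩
    · simp only [fareyLevel, List.isChain_cons_cons, List.isChain_singleton, and_true]
      exact ⟨0, 1, 1, 1, h0, h1, by simp⟩
    · intro w hw
      simp only [fareyLevel, List.mem_cons, List.not_mem_nil, or_false] at hw
      rcases hw with rfl | rfl
      · exact ⟨0, 1, h0, by simp⟩
      · exact ⟨1, 1, h1, by simp⟩
  | succ n ih => exact ⟨isChain_fareyInsert ih.1, isMech_of_mem_fareyInsert ih.1 ih.2⟩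

lemma exists_of_mem_FareySet {w : List ℕ} (h : w ∈ FareySet) :
    ∃ p q : ℕ, w = mechWord p q ∧ 0 < p ∧ p < q ∧ p.Coprime q := by
  obtain ⟨⟨n, hn⟩, h0, h1⟩ := h
  obtain ⟨p, q, rfl, hq, hp, hcop⟩ := (fareyLevel_spec n).2 w hn
  refine ⟨p, q, rfl, Nat.pos_of_ne_zero ?_, lt_of_le_of_ne hp ?_, hcop⟩
  · rintro rfl
    obtain rfl : q = 1 := by simpa using hcop
    exact h0 (by decide)
  · rintro rfl
    obtain rfl : p = 1 := by simpa using hcop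
    exact h1 (by decide)

lemma theta_mechWord (p : ℕ) {q : ℕ} (hq : 0 < q) :
    theta (mechWord p q) = mechWord (p + q) q := by
  simp only [theta, mechWord, List.map_map]
  refine List.map_congr_left fun i _ => ?_
  have hle : i * p / q ≤ (i + 1) * p / q := Nat.div_le_div_right (by gcongr; omega)
  simp only [Function.comp, mul_add, Nat.add_mul_div_right _ _ hq]
  omega

lemma theta_iterate_mechWord (p : ℕ) {q : ℕ} (hq : 0 < q) (k : ℕ) :
    theta^[k] (mechWord p q) = mechWord (p + k * q) q := by
  induction k with
  | zero => simp
  | succ k ih => rw [Function.iterate_succ_apply', ih, theta_mechWord _ hq]; congr 1; ring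

lemma exists_of_mem_FareyExt {w : List ℕ} (h : w ∈ FareyExt) :
    ∃ p q : ℕ, w = mechWord p q ∧ 0 < p ∧ 0 < q ∧ p.Coprime q := by
  obtain ⟨v, hv, k, rfl⟩ := h
  obtain ⟨p, q, rfl, hp, hq, hcop⟩ :
      ∃ p q : ℕ, v = mechWord p q ∧ 0 < p ∧ 0 < q ∧ p.Coprime q := by
    rcases hv with hv | rfl
    · obtain ⟨p, q, hw, hp, hpq, hcop⟩ := exists_of_mem_FareySet hv
      exact ⟨p, q, hw, hp, by omega, hcop⟩
    · exact ⟨1, 1, by decide, by simp⟩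
  exact ⟨p + k * q, q, theta_iterate_mechWord p hq k, by omega, hq, by simpa using hcop⟩

lemma mechWord_ne {p q p' q' : ℕ} (h : p.Coprime q) (h' : p'.Coprime q')
    (hne : mechWord p q ≠ mechWord p' q') : p * q' ≠ p' * q := by
  intro heq
  have h1 : p ∣ p' := h.dvd_of_dvd_mul_right ⟨q', heq.symm⟩
  have h2 : p' ∣ p := h'.dvd_of_dvd_mul_right ⟨q, heq⟩
  have h3 : q ∣ q' := h.symm.dvd_of_dvd_mul_left ⟨p', by rw [heq, mul_comm]⟩
  have h4 : q' ∣ q := h'.symm.dvd_of_dvd_mul_left ⟨p, by rw [← heq, mul_comm]⟩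
  rw [Nat.dvd_antisymm h1 h2, Nat.dvd_antisymm h3 h4] at hne
  exact hne rfl

/-! ### The intervals -/

lemma Icc_disjoint_Icc_of_lt {a b c d : ℝ} (h : b < c) :
    Disjoint (Set.Icc a b) (Set.Icc c d) :=
  Set.disjoint_left.2 fun x hx hx' => by linarith [hx.2, hx'.1]

/-- `S` is a word whose periodic sequence is the lower member of an admissible pair. -/
def AdmWord (S : List ℕ) (m : ℕ) (s l : ℕ → ℤ) : Prop := Adm m s l ∧ Rep S m s

lemma isCoprime_cast {p q : ℕ} (h : p.Coprime q) : IsCoprime (p : ℤ) (q : ℤ) :=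
  Nat.isCoprime_iff_coprime.2 h

lemma admWord_mechWord {p q : ℕ} (hp : 0 < p) (hq : 0 < q) (hcop : p.Coprime q) :
    AdmWord (mechWord p q) q (mechS p q) (mechL p q) :=
  ⟨mech_adm hq (by exact_mod_cast hp) (isCoprime_cast hcop), rep_mechWord p q⟩

lemma Jint_mechWord_disjoint_of_lt {p q p' q' : ℕ} (hp : 0 < p) (hq : 0 < q) (hcop : p.Coprime q)
    (hp' : 0 < p') (hq' : 0 < q') (hcop' : p'.Coprime q') (h : p * q' < p' * q) :
    Disjoint (Jint (mechWord p q)) (Jint (mechWord p' q')) := by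
  obtain ⟨hA, hR⟩ := admWord_mechWord hp hq hcop
  obtain ⟨hA', hR'⟩ := admWord_mechWord hp' hq' hcop'
  have hz : (0 : ℤ) < q := by exact_mod_cast hq
  have hz' : (0 : ℤ) < q' := by exact_mod_cast hq'
  have hlt : (p : ℤ) * q' < p' * q := by exact_mod_cast h
  refine Icc_disjoint_Icc_of_lt ?_
  rw [betaR_eq hA hR, betaL_eq hA' hR']
  have hx := hA.psi_nice (c := step01) (fun i => by cases i <;> simp [step01]) rfl
  have hy := hA'.psi_nice (c := fun _ => 0) (fun _ => Or.inl rfl) rfl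
  rw [psi_mech_step01 hq (isCoprime_cast hcop)] at hx ⊢
  rw [psi_zero] at hy ⊢
  have hle := sh_upS_le_mechL hz hz' hlt
  refine hx.baseOf_lt hy hle ?_
  have h0 := hle 0
  rw [sh_zero] at h0
  exact h0.eq_or_lt.resolve_left (upS_ne_mechL hz hz' hlt)

section Renormalization

variable {m : ℕ} {s l : ℕ → ℤ} {S : List ℕ}

lemma AdmWord.subst (h : AdmWord S m s l) {p q : ℕ} (hp : 0 < p) (hpq : p < q)
    (hcop : p.Coprime q) :
    AdmWord (subst S (mechWord p q)) (m * q) (psi m s l (stS p q)) (psi m s l (stL p q)) := by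
  have hq : 0 < q := by omega
  have hpz : (0 : ℤ) < p := by exact_mod_cast hp
  have hpqz : (p : ℤ) < q := by exact_mod_cast hpq
  have hc := isCoprime_cast hcop
  refine ⟨h.1.comp (by rw [sh_stS, sh_stL]; exact mech_good hq hc) (stS_binary hq hpz.le hpqz.le)
    (stL_binary hq hpz.le hpqz.le hc) (stS_periodic hq _) (stL_periodic hq _)
    (stS_zero hpz hpqz) (stS_one hpz hpqz) (stL_zero hpz hpqz) (stL_one hpz hpqz)
    (exists_stL_eq_sh hq hc), ?_⟩
  have hr := rep_mechWord p q
  have hbin : ∀ d ∈ mechWord p q, d ≤ 1 := by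
    intro d hd
    obtain ⟨i, hi, rfl⟩ := List.getElem_of_mem hd
    have h1 := hr.getElem hi
    have h2 := congrFun (sh_stS p q) i
    rcases stS_binary hq hpz.le hpqz.le (1 + i) with h3 | h3 <;>
      simp only [sh] at h2 <;> omega
  have hsub : _root_.subst S (mechWord p q) = phiAux S 1 (mechWord p q) := by
    have h0 : (mechWord p q).getD 0 0 = 0 := by
      have := hr.2 0 hq
      have h2 := congrFun (sh_stS p q) 0
      rw [← h2] at this
      simp only [sh, add_zero, stS_one hpz hpqz] at this
      exact_mod_cast this
    rcases hw : mechWord p q with _ | ⟨d, rest⟩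
    · rfl
    · rw [hw] at h0
      obtain rfl : d = 0 := by simpa using h0
      rfl
  rw [hsub, mul_comm m q]
  have := rep_phiAux h.1 h.2 (mechWord p q) 1 (stS p q) le_rfl hbin fun k hk => by
    rcases k with _ | k
    · simp [stS_zero hpz hpqz]
    · have h2 := congrFun (sh_stS p q) k
      rw [hr.1] at hk
      rw [List.getD_cons_succ, hr.2 k hk, ← h2, sh, add_comm]
  rwa [hr.1] at this

lemma AdmWord.betaL_subst (h : AdmWord S m s l) {p q : ℕ} (hp : 0 < p) (hpq : p < q)
    (hcop : p.Coprime q) :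
    betaL (_root_.subst S (mechWord p q)) = baseOf (psi m s l (stL p q)) := by
  obtain ⟨hA, hR⟩ := h.subst hp hpq hcop
  rw [betaL_eq hA hR, psi_zero]

lemma AdmWord.betaR_subst (h : AdmWord S m s l) {p q : ℕ} (hp : 0 < p) (hpq : p < q)
    (hcop : p.Coprime q) :
    betaR (_root_.subst S (mechWord p q)) = baseOf (psi m s l (stU p q)) := by
  obtain ⟨hA, hR⟩ := h.subst hp hpq hcop
  rw [betaR_eq hA hR, psi_psi_step01 h.1.pos (by exact_mod_cast hp) (by exact_mod_cast hpq)
    (isCoprime_cast hcop)]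

lemma step01_binary : Binary step01 := fun i => by cases i <;> simp [step01]

lemma pulse_binary : Binary pulse := fun i => by
  by_cases h : i = 1 <;> simp [pulse, h]

lemma Binary.le_step01 {c : ℕ → ℤ} (hc : Binary c) (k : ℕ) :
    LexLE (FareyIntervals.sh (k + 1) c) (FareyIntervals.sh 1 step01) := by
  intro n _
  rcases hc (k + 1 + n) with h | h <;> simp [FareyIntervals.sh, step01, h]

lemma pulse_le {b : ℕ → ℤ} (hb : Binary b) (hb1 : b 1 = 1) (k : ℕ) :
    LexLE (sh (k + 1) pulse) (sh 1 b) := by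
  intro n _
  rcases Nat.eq_zero_or_pos n with rfl | hn
  · rcases pulse_binary (k + 1) with h | h <;> simp [sh, h, hb1]
  · rcases hb (1 + n) with h | h <;> simp only [sh, pulse, h] <;> split_ifs <;> omega

lemma AdmWord.betaL_lt_betaStar (h : AdmWord S m s l) : betaL S < betaStar S := by
  rw [betaL_eq h.1 h.2, betaStar_eq h.1 h.2]
  refine h.1.baseOf_psi_lt (fun _ => Or.inl rfl) pulse_binary rfl rfl rfl (fun k n _ => ?_)
    fun hc => by simpa [pulse] using congrFun hc 1
  rcases pulse_binary (1 + n) with h | h <;> simp [sh, h]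

lemma AdmWord.betaStar_lt_betaR (h : AdmWord S m s l) : betaStar S < betaR S := by
  rw [betaR_eq h.1 h.2, betaStar_eq h.1 h.2]
  exact h.1.baseOf_psi_lt pulse_binary step01_binary rfl rfl rfl pulse_binary.le_step01
    fun hc => by simpa [pulse, step01] using congrFun hc 2

lemma AdmWord.betaStar_lt_betaL_subst (h : AdmWord S m s l) {p q : ℕ} (hp : 0 < p) (hpq : p < q)
    (hcop : p.Coprime q) : betaStar S < betaL (_root_.subst S (mechWord p q)) := by
  have hpz : (0 : ℤ) < p := by exact_mod_cast hp
  have hpqz : (p : ℤ) < q := by exact_mod_cast hpq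
  have hq : 0 < q := by omega
  have hbin := stL_binary hq hpz.le hpqz.le (isCoprime_cast hcop)
  rw [h.betaL_subst hp hpq hcop, betaStar_eq h.1 h.2]
  refine h.1.baseOf_psi_lt pulse_binary hbin rfl (stL_zero hpz hpqz) (stL_one hpz hpqz)
    (pulse_le hbin (stL_one hpz hpqz)) fun hc => ?_
  have h1 := congrFun hc (1 + q)
  rw [stL_periodic hq, stL_one hpz hpqz, pulse, if_neg (by omega)] at h1
  exact absurd h1 (by norm_num)

lemma AdmWord.betaR_subst_lt (h : AdmWord S m s l) {p q : ℕ} (hp : 0 < p) (hpq : p < q)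
    (hcop : p.Coprime q) : betaR (_root_.subst S (mechWord p q)) < betaR S := by
  have hpz : (0 : ℤ) < p := by exact_mod_cast hp
  have hpqz : (p : ℤ) < q := by exact_mod_cast hpq
  have hq : 0 < q := by omega
  have hbin := stU_binary hpz hpqz
  rw [h.betaR_subst hp hpq hcop, betaR_eq h.1 h.2]
  refine h.1.baseOf_psi_lt hbin step01_binary rfl rfl rfl hbin.le_step01 fun hc => ?_
  have h1 := congrFun hc (1 + q)
  rw [stU_of_two_le _ _ (by omega), stS_periodic hq, stS_one hpz hpqz, step01,
    if_neg (by omega)] at h1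
  exact absurd h1 (by norm_num)

lemma AdmWord.Jint_subst_disjoint_of_lt (h : AdmWord S m s l) {p q p' q' : ℕ} (hp : 0 < p)
    (hpq : p < q) (hcop : p.Coprime q) (hp' : 0 < p') (hpq' : p' < q') (hcop' : p'.Coprime q')
    (hlt : p * q' < p' * q) :
    Disjoint (Jint (_root_.subst S (mechWord p q))) (Jint (_root_.subst S (mechWord p' q'))) := by
  have hpz : (0 : ℤ) < p := by exact_mod_cast hp
  have hpqz : (p : ℤ) < q := by exact_mod_cast hpq
  have hpz' : (0 : ℤ) < p' := by exact_mod_cast hp'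
  have hpqz' : (p' : ℤ) < q' := by exact_mod_cast hpq'
  have hltz : (p : ℤ) * q' < p' * q := by exact_mod_cast hlt
  refine Icc_disjoint_Icc_of_lt ?_
  rw [h.betaR_subst hp hpq hcop, h.betaL_subst hp' hpq' hcop']
  refine h.1.baseOf_psi_lt (stU_binary hpz hpqz)
    (stL_binary (by omega) hpz'.le hpqz'.le (isCoprime_cast hcop')) rfl (stL_zero hpz' hpqz')
    (stL_one hpz' hpqz') (fun k => ?_) fun hc => ?_
  · rw [← sh_sh, sh_stU, sh_stL]
    exact sh_upS_le_mechL (hpz.trans hpqz) (hpz'.trans hpqz') hltz k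
  · refine upS_ne_mechL (hpz.trans hpqz) (hpz'.trans hpqz') hltz ?_
    rw [← sh_stU, ← sh_stL, hc]

end Renormalization

/-- `S` represents some admissible pair. -/
def IsAdm (S : List ℕ) : Prop := ∃ m s l, AdmWord S m s l

lemma IsAdm.of_mem_FareyExt {w : List ℕ} (h : w ∈ FareyExt) : IsAdm w := by
  obtain ⟨p, q, rfl, hp, hq, hcop⟩ := exists_of_mem_FareyExt h
  exact ⟨_, _, _, admWord_mechWord hp hq hcop⟩

lemma IsAdm.subst {S r : List ℕ} (h : IsAdm S) (hr : r ∈ FareySet) : IsAdm (subst S r) := by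
  obtain ⟨m, s, l, h⟩ := h
  obtain ⟨p, q, rfl, hp, hpq, hcop⟩ := exists_of_mem_FareySet hr
  exact ⟨_, _, _, h.subst hp hpq hcop⟩

lemma IsAdm.foldl_subst : ∀ {rs : List (List ℕ)} {S : List ℕ}, IsAdm S →
    (∀ r ∈ rs, r ∈ FareySet) → IsAdm (rs.foldl _root_.subst S)
  | [], _, h, _ => h
  | r :: _, _, h, hrs =>
    (h.subst (hrs r (by simp))).foldl_subst fun r' hr' => hrs r' (by simp [hr'])

lemma exists_of_mem_LambdaExt {S : List ℕ} (h : S ∈ LambdaExt) :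
    ∃ s₁ ∈ FareyExt, ∃ rs : List (List ℕ), (∀ r ∈ rs, r ∈ FareySet) ∧ S = rs.foldl subst s₁ := by
  simp only [LambdaExt, Set.mem_iUnion] at h
  obtain ⟨-, -, s₁, hs₁, rs, -, hrs, rfl⟩ := h
  exact ⟨s₁, hs₁, rs, hrs, rfl⟩

lemma IsAdm.of_mem_LambdaExt {S : List ℕ} (h : S ∈ LambdaExt) : IsAdm S := by
  obtain ⟨s₁, hs₁, rs, hrs, rfl⟩ := exists_of_mem_LambdaExt h
  exact (IsAdm.of_mem_FareyExt hs₁).foldl_subst hrs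

lemma Jint_disjoint_of_mem_FareyExt {w w' : List ℕ} (h : w ∈ FareyExt) (h' : w' ∈ FareyExt)
    (hne : w ≠ w') : Disjoint (Jint w) (Jint w') := by
  obtain ⟨p, q, rfl, hp, hq, hcop⟩ := exists_of_mem_FareyExt h
  obtain ⟨p', q', rfl, hp', hq', hcop'⟩ := exists_of_mem_FareyExt h'
  rcases lt_or_gt_of_ne (mechWord_ne hcop hcop' hne) with hlt | hlt
  · exact Jint_mechWord_disjoint_of_lt hp hq hcop hp' hq' hcop' hlt
  · exact (Jint_mechWord_disjoint_of_lt hp' hq' hcop' hp hq hcop hlt).symm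

lemma IsAdm.Iint_subset_Jint {S : List ℕ} (h : IsAdm S) : Iint S ⊆ Jint S := by
  obtain ⟨m, s, l, h⟩ := h
  exact Set.Icc_subset_Icc_right h.betaStar_lt_betaR.le

lemma IsAdm.Jint_subst_subset {S r : List ℕ} (h : IsAdm S) (hr : r ∈ FareySet) :
    Jint (_root_.subst S r) ⊆ Jint S := by
  obtain ⟨m, s, l, h⟩ := h
  obtain ⟨p, q, rfl, hp, hpq, hcop⟩ := exists_of_mem_FareySet hr
  exact Set.Icc_subset_Icc (h.betaL_lt_betaStar.trans (h.betaStar_lt_betaL_subst hp hpq hcop)).le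
    (h.betaR_subst_lt hp hpq hcop).le

lemma IsAdm.Iint_disjoint_Jint_subst {S r : List ℕ} (h : IsAdm S) (hr : r ∈ FareySet) :
    Disjoint (Iint S) (Jint (_root_.subst S r)) := by
  obtain ⟨m, s, l, h⟩ := h
  obtain ⟨p, q, rfl, hp, hpq, hcop⟩ := exists_of_mem_FareySet hr
  exact Icc_disjoint_Icc_of_lt (h.betaStar_lt_betaL_subst hp hpq hcop)

lemma IsAdm.Jint_subst_disjoint {S r r' : List ℕ} (h : IsAdm S) (hr : r ∈ FareySet)
    (hr' : r' ∈ FareySet) (hne : r ≠ r') :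
    Disjoint (Jint (_root_.subst S r)) (Jint (_root_.subst S r')) := by
  obtain ⟨m, s, l, h⟩ := h
  obtain ⟨p, q, rfl, hp, hpq, hcop⟩ := exists_of_mem_FareySet hr
  obtain ⟨p', q', rfl, hp', hpq', hcop'⟩ := exists_of_mem_FareySet hr'
  rcases lt_or_gt_of_ne (mechWord_ne hcop hcop' hne) with hlt | hlt
  · exact h.Jint_subst_disjoint_of_lt hp hpq hcop hp' hpq' hcop' hlt
  · exact (h.Jint_subst_disjoint_of_lt hp' hpq' hcop' hp hpq hcop hlt).symm

lemma IsAdm.Jint_foldl_subset : ∀ {rs : List (List ℕ)} {S : List ℕ}, IsAdm S →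
    (∀ r ∈ rs, r ∈ FareySet) → Jint (rs.foldl _root_.subst S) ⊆ Jint S
  | [], _, _, _ => subset_rfl
  | r :: _, _, h, hrs =>
    ((h.subst (hrs r (by simp))).Jint_foldl_subset fun r' hr' => hrs r' (by simp [hr'])).trans
      (h.Jint_subst_subset (hrs r (by simp)))

lemma IsAdm.Iint_foldl_subset {rs : List (List ℕ)} {S : List ℕ} (h : IsAdm S)
    (hrs : ∀ r ∈ rs, r ∈ FareySet) : Iint (rs.foldl _root_.subst S) ⊆ Jint S :=
  (h.foldl_subst hrs).Iint_subset_Jint.trans (h.Jint_foldl_subset hrs)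

lemma IsAdm.Iint_foldl_disjoint : ∀ {rs rs' : List (List ℕ)} {S : List ℕ}, IsAdm S →
    (∀ r ∈ rs, r ∈ FareySet) → (∀ r ∈ rs', r ∈ FareySet) →
    rs.foldl _root_.subst S ≠ rs'.foldl _root_.subst S →
    Disjoint (Iint (rs.foldl _root_.subst S)) (Iint (rs'.foldl _root_.subst S))
  | [], [], _, _, _, _, hne => absurd rfl hne
  | [], r :: _, _, h, _, hrs, _ => by
    have hr := hrs r (by simp)
    exact (h.Iint_disjoint_Jint_subst hr).mono_right
      ((h.subst hr).Iint_foldl_subset fun r' hr' => hrs r' (by simp [hr']))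
  | r :: _, [], _, h, hrs, _, _ => by
    have hr := hrs r (by simp)
    exact ((h.Iint_disjoint_Jint_subst hr).mono_right
      ((h.subst hr).Iint_foldl_subset fun r' hr' => hrs r' (by simp [hr']))).symm
  | r :: rs, r' :: rs', _, h, hrs, hrs', hne => by
    have hr := hrs r (by simp)
    have hr' := hrs' r' (by simp)
    have ht : ∀ x ∈ rs, x ∈ FareySet := fun x hx => hrs x (by simp [hx])
    have ht' : ∀ x ∈ rs', x ∈ FareySet := fun x hx => hrs' x (by simp [hx])
    by_cases hrr : r = r'
    · subst hrr
      exact (h.subst hr).Iint_foldl_disjoint ht ht' hne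
    · exact (h.Jint_subst_disjoint hr hr' hrr).mono ((h.subst hr).Iint_foldl_subset ht)
        ((h.subst hr').Iint_foldl_subset ht')

lemma Iint_disjoint_of_mem_LambdaExt {S S' : List ℕ} (h : S ∈ LambdaExt) (h' : S' ∈ LambdaExt)
    (hne : S ≠ S') : Disjoint (Iint S) (Iint S') := by
  obtain ⟨w, hw, rs, hrs, rfl⟩ := exists_of_mem_LambdaExt h
  obtain ⟨w', hw', rs', hrs', rfl⟩ := exists_of_mem_LambdaExt h'
  by_cases hww : w = w'
  · subst hww
    exact (IsAdm.of_mem_FareyExt hw).Iint_foldl_disjoint hrs hrs' hne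
  · exact (Jint_disjoint_of_mem_FareyExt hw hw' hww).mono
      ((IsAdm.of_mem_FareyExt hw).Iint_foldl_subset hrs)
      ((IsAdm.of_mem_FareyExt hw').Iint_foldl_subset hrs')

end FareyIntervals

/-- (i) The Farey intervals `J^s`, `s ∈ F_e`, are pairwise disjoint.
(ii) For each `S ∈ Λ_e`, the intervals `J^{S•r}`, `r ∈ F`, are pairwise disjoint
subintervals of `J^S`. (iii) The basic intervals `I^S`, `S ∈ Λ_e`, are pairwise
disjoint. -/
theorem intervals_disjoint :
    (∀ s ∈ FareyExt, ∀ s' ∈ FareyExt, s ≠ s' → Disjoint (Jint s) (Jint s')) ∧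
    (∀ S ∈ LambdaExt, (∀ r ∈ FareySet, Jint (subst S r) ⊆ Jint S) ∧
      ∀ r ∈ FareySet, ∀ r' ∈ FareySet, r ≠ r' →
        Disjoint (Jint (subst S r)) (Jint (subst S r'))) ∧
    (∀ S ∈ LambdaExt, ∀ S' ∈ LambdaExt, S ≠ S' → Disjoint (Iint S) (Iint S')) := by
  exact ⟨fun _ hs _ hs' hne => FareyIntervals.Jint_disjoint_of_mem_FareyExt hs hs' hne,
    fun _ hS =>
      have h := FareyIntervals.IsAdm.of_mem_LambdaExt hS
      ⟨fun _ hr => h.Jint_subst_subset hr, fun _ hr _ hr' hne => h.Jint_subst_disjoint hr hr' hne⟩,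
    fun _ hS _ hS' hne => FareyIntervals.Iint_disjoint_of_mem_LambdaExt hS hS' hne⟩
end
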